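/- Let 0 < α < 1 and 0 < p < 1 be fixed. Then there exist a constant C > 0 and, for each n ≥ 2, an integer k_n with |k_n − (log_{1/√(pq)} n − (|ln(p/q)| / (2 ln^{3/2}(1/√(pq)))) · Φ^{-1}(α) · √(ln n))| ≤ C, such that the probability that F_n(α) ∈ {k_n, k_n + 1} tends to 1 as n → ∞. -/

import Mathlib

/-!
Partial fillup in tries (Janson–Szpankowski), Theorem 1 (two-point concentration
of the α-fillup level `F_n(α)`).

Model: an outcome `ω : ℕ → ℕ → Bool` encodes infinitely many strings, where
`ω i j` is the `j`-th bit of the `i`-th string; the measure `ν` makes all bits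
i.i.d. with `P(bit = 1) = p`.  The trie on `n` strings uses strings `0,…,n-1`.
-/

open MeasureTheory ProbabilityTheory Real Filter

/-- The number of strings among the first `n` (encoded in `ω`) whose first `k` bits
form the word `r ∈ {0,1}^k`. -/
def prefCount (ω : ℕ → ℕ → Bool) (n k : ℕ) (r : Fin k → Bool) : ℕ :=
  ((Finset.range n).filter fun i => ∀ j : Fin k, ω i j = r j).card

/-- `X_k`: the number of words `r ∈ {0,1}^k` that are prefixes of at least two of the
first `n` strings. -/
def fillCount (ω : ℕ → ℕ → Bool) (n k : ℕ) : ℕ :=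
  (Finset.univ.filter fun r : Fin k → Bool => 2 ≤ prefCount ω n k r).card

/-- `X̄_k = X_k / 2^k`, the proportion of filled words at level `k`. -/
noncomputable def fracFilled (ω : ℕ → ℕ → Bool) (n k : ℕ) : ℝ :=
  (fillCount ω n k : ℝ) / 2 ^ k

/-- The α-fillup level `F_n(α) = max {k : X̄_k ≥ α}`. -/
noncomputable def fillupLevel (α : ℝ) (ω : ℕ → ℕ → Bool) (n : ℕ) : ℕ :=
  sSup {k | α ≤ fracFilled ω n k}

/-- `ν` is a probability measure on `ℕ → ℕ → Bool` under which all the bits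
`ω i j` are i.i.d. with `P(bit = 1) = p` (characterized by cylinder probabilities). -/
def IIDBits (p : ℝ) (ν : Measure (ℕ → ℕ → Bool)) : Prop :=
  IsProbabilityMeasure ν ∧
    ∀ (S : Finset (ℕ × ℕ)) (b : ℕ × ℕ → Bool),
      ν {ω | ∀ s ∈ S, ω s.1 s.2 = b s} =
        ∏ s ∈ S, ENNReal.ofReal (if b s then p else 1 - p)

/-- Expectation of `g(S_k)`, `S_k` the sum of `k` independent fair signs. -/
noncomputable def radE : ℕ → (ℝ → ℝ) → ℝ
  | 0, g => g 0
  | k + 1, g => radE k (fun s => (g (s + 1) + g (s - 1)) / 2)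

theorem radE_mono (k : ℕ) : ∀ {f g : ℝ → ℝ}, (∀ s, f s ≤ g s) → radE k f ≤ radE k g := by
  induction k with
  | zero => intro f g h; exact h 0
  | succ k ih =>
    intro f g h
    exact ih fun s => by linarith [h (s + 1), h (s - 1)]

theorem radE_const (k : ℕ) (c : ℝ) : radE k (fun _ => c) = c := by
  induction k with
  | zero => rfl
  | succ k ih => simp only [radE]; rw [← ih]; simp [ih]

theorem radE_add (k : ℕ) : ∀ (f g : ℝ → ℝ),
    radE k (fun s => f s + g s) = radE k f + radE k g := by
  induction k with
  | zero => intro f g; rfl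
  | succ k ih =>
    intro f g
    simp only [radE]
    rw [← ih]; congr 1; funext s; ring

theorem radE_smul (k : ℕ) (c : ℝ) : ∀ (f : ℝ → ℝ),
    radE k (fun s => c * f s) = c * radE k f := by
  induction k with
  | zero => intro f; rfl
  | succ k ih =>
    intro f
    simp only [radE]
    rw [← ih]; congr 1; funext s; ring

theorem radE_sub (k : ℕ) (f g : ℝ → ℝ) :
    radE k (fun s => f s - g s) = radE k f - radE k g := by
  have h := radE_add k f (fun s => (-1) * g s)
  rw [radE_smul] at h
  have : (fun s => f s - g s) = fun s => f s + (-1) * g s := by funext s; ring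
  rw [this, h]; ring

theorem radE_neg (k : ℕ) : ∀ (g : ℝ → ℝ), radE k (fun s => g (-s)) = radE k g := by
  induction k with
  | zero => intro g; simp [radE]
  | succ k ih =>
    intro g
    simp only [radE]
    rw [← ih (fun s => (g (s + 1) + g (s - 1)) / 2)]
    congr 1; funext s
    rw [show -(s + 1) = -s - 1 by ring, show -(s - 1) = -s + 1 by ring]; ring

theorem radE_abs_le (k : ℕ) {f g : ℝ → ℝ} (h : ∀ s, |f s| ≤ g s) : |radE k f| ≤ radE k g := by
  rw [abs_le]
  constructor
  · have := radE_mono k (f := fun s => (-1) * g s) (g := f)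
      (fun s => by linarith [neg_abs_le (f s), h s])
    rw [radE_smul] at this; linarith
  · exact radE_mono k fun s => (le_abs_self _).trans (h s)

/-- Stein identity for the sum of signs. -/
theorem radE_stein (k : ℕ) : ∀ (g : ℝ → ℝ), radE (k + 1) (fun s => s * g s) =
    ((k : ℝ) + 1) / 2 * radE k (fun s => g (s + 1) - g (s - 1)) := by
  induction k with
  | zero => intro g; simp [radE]; ring
  | succ k ih =>
    intro g
    have h1 : radE (k + 1 + 1) (fun s => s * g s) =
        radE (k + 1) (fun s => s * ((g (s + 1) + g (s - 1)) / 2)) +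
          (1 / 2) * radE (k + 1) (fun s => g (s + 1) - g (s - 1)) := by
      rw [← radE_smul, ← radE_add]
      rw [radE]
      congr 1; funext s; ring
    rw [h1, ih]
    have h2 : radE k (fun s => (g (s + 1 + 1) + g (s + 1 - 1)) / 2 -
        (g (s - 1 + 1) + g (s - 1 - 1)) / 2) = radE (k + 1) (fun s => g (s + 1) - g (s - 1)) := by
      rw [radE]; congr 1; funext s; 
      simp only [add_sub_cancel_right, sub_add_cancel]; ring
    rw [h2]; push_cast; ring

theorem radE_sq (k : ℕ) : radE k (fun s => s * s) = k := by
  cases k with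
  | zero => simp [radE]
  | succ k =>
    rw [radE_stein k (fun s => s)]
    have : (fun s : ℝ => s + 1 - (s - 1)) = fun _ => 2 := by funext s; ring
    rw [this, radE_const]; push_cast; ring

theorem radE_abs (k : ℕ) : radE k (fun s => |s|) ≤ √k := by
  rcases Nat.eq_zero_or_pos k with rfl | hk
  · simp [radE]
  have hk' : (0 : ℝ) < √k := by positivity
  have hs : √(k : ℝ) * √k = k := Real.mul_self_sqrt (by positivity)
  have : radE k (fun s => √k * |s|) ≤ radE k (fun s => (1 / 2) * (s * s) + (k / 2 : ℝ)) := by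
    apply radE_mono
    intro s
    nlinarith [sq_nonneg (|s| - √k), abs_mul_abs_self s]
  rw [radE_smul, radE_add, radE_smul, radE_sq, radE_const] at this
  have h2 : √k * radE k (fun s => |s|) ≤ √k * √k := by rw [hs]; linarith
  exact le_of_mul_le_mul_left h2 hk'

theorem radE_tv (k : ℕ) (h : ℝ → ℝ) (hb : ∀ s, |h s| ≤ 1) :
    |radE k (fun s => h (s + 1) - h (s - 1))| ≤ 2 / √((k : ℝ) + 1) := by
  have h1 := radE_stein k h
  have h2 : |radE (k + 1) (fun s => s * h s)| ≤ √((k : ℝ) + 1) := by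
    have := radE_abs (k + 1)
    push_cast at this
    refine (radE_abs_le (k + 1) fun s => ?_).trans this
    rw [abs_mul]; nlinarith [abs_nonneg s, hb s]
  rw [h1, abs_mul, abs_of_pos (by positivity)] at h2
  have hs : √((k : ℝ) + 1) * √((k : ℝ) + 1) = k + 1 := Real.mul_self_sqrt (by positivity)
  have hp : 0 < √((k : ℝ) + 1) := by positivity
  rw [le_div_iff₀ hp]
  have : √((k : ℝ) + 1) * (|radE k (fun s => h (s + 1) - h (s - 1))| * √((k : ℝ) + 1)) ≤
      √((k : ℝ) + 1) * 2 := by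
    nlinarith
  exact le_of_mul_le_mul_left this hp

theorem psi_integrable : Integrable (fun t : ℝ => exp (-(t ^ 2 / 2))) := by
  have := integrable_exp_neg_mul_sq (b := 1 / 2) (by norm_num)
  refine this.congr (Eventually.of_forall fun t => ?_)
  simp only; congr 1; ring

theorem psi_integral : ∫ t : ℝ, exp (-(t ^ 2 / 2)) = √(2 * Real.pi) := by
  have := integral_gaussian (1 / 2)
  rw [show Real.pi / (1 / 2) = 2 * Real.pi by ring] at this
  rw [← this]
  congr 1; funext t; congr 1; ring

theorem kpsi_integrable {k0 : ℝ → ℝ} (hc : Continuous k0) (hb : ∀ t, |k0 t| ≤ 1) :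
    Integrable (fun t : ℝ => k0 t * exp (-(t ^ 2 / 2))) := by
  refine psi_integrable.mono' (by fun_prop) (Eventually.of_forall fun t => ?_)
  rw [Real.norm_eq_abs, abs_mul, abs_of_pos (exp_pos _)]
  nlinarith [exp_pos (-(t ^ 2 / 2)), hb t]

theorem tpsi_tail (w : ℝ) (hw : 0 < w) :
    IntegrableOn (fun t : ℝ => t * exp (-(t ^ 2 / 2))) (Set.Ioi w) ∧
    ∫ t in Set.Ioi w, t * exp (-(t ^ 2 / 2)) = exp (-(w ^ 2 / 2)) := by
  have hd : ∀ x ∈ Set.Ici w, HasDerivAt (fun t : ℝ => -exp (-(t ^ 2 / 2)))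
      (x * exp (-(x ^ 2 / 2))) x := by
    intro x _
    have h1 : HasDerivAt (fun t : ℝ => -(t ^ 2 / 2)) (-x) x := by
      exact ((hasDerivAt_pow 2 x).div_const 2).neg.congr_deriv (by simp)
    exact h1.exp.neg.congr_deriv (by ring)
  have hpos : ∀ x ∈ Set.Ioi w, 0 ≤ x * exp (-(x ^ 2 / 2)) := fun x hx =>
    mul_nonneg (hw.le.trans (le_of_lt hx)) (exp_pos _).le
  have ht : Tendsto (fun t : ℝ => -exp (-(t ^ 2 / 2))) atTop (nhds 0) := by
    rw [← neg_zero]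
    refine Tendsto.neg ?_
    refine tendsto_exp_neg_atTop_nhds_zero.comp ?_
    exact (tendsto_pow_atTop (by norm_num)).atTop_div_const (by norm_num)
  refine ⟨integrableOn_Ioi_deriv_of_nonneg' hd hpos ht, ?_⟩
  rw [integral_Ioi_of_hasDerivAt_of_nonneg' hd hpos ht]; simp

theorem psi_tail_bound {k0 : ℝ → ℝ} (hc : Continuous k0) (hb : ∀ t, |k0 t| ≤ 1)
    (w : ℝ) (hw : 0 < w) :
    |∫ t in Set.Ioi w, k0 t * exp (-(t ^ 2 / 2))| * w ≤ exp (-(w ^ 2 / 2)) := by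
  obtain ⟨hi, he⟩ := tpsi_tail w hw
  rw [← he, ← abs_of_pos hw, ← abs_mul, abs_of_pos hw, ← integral_mul_const, ← Real.norm_eq_abs]
  refine norm_integral_le_of_norm_le hi ?_
  refine (ae_restrict_iff' measurableSet_Ioi).2 (Eventually.of_forall fun t ht => ?_)
  have ht' : w < t := ht
  rw [Real.norm_eq_abs, abs_mul, abs_mul, abs_of_pos (exp_pos _), abs_of_pos hw]
  have := hb t
  have h2 : |k0 t| * w ≤ t := by nlinarith [abs_nonneg (k0 t)]
  nlinarith [exp_pos (-(t ^ 2 / 2))]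

theorem stein_solution {k0 : ℝ → ℝ} (hc : Continuous k0) (hb : ∀ t, |k0 t| ≤ 1)
    (hz : ∫ t, k0 t * exp (-(t ^ 2 / 2)) = 0) :
    ∃ f : ℝ → ℝ, (∀ w, HasDerivAt f (w * f w + k0 w) w) ∧ ∀ w, |w * f w| ≤ 1 ∧ |f w| ≤ 5 := by
  set G : ℝ → ℝ := fun w => ∫ t in Set.Iic w, k0 t * exp (-(t ^ 2 / 2)) with hG
  have hIntg := kpsi_integrable hc hb
  have hcont : Continuous (fun t : ℝ => k0 t * exp (-(t ^ 2 / 2))) := by fun_prop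
  have hGd : ∀ w, HasDerivAt G (k0 w * exp (-(w ^ 2 / 2))) w := by
    intro w
    have h1 : G = fun w => G 0 + ∫ t in (0 : ℝ)..w, k0 t * exp (-(t ^ 2 / 2)) := by
      funext w
      have := intervalIntegral.integral_Iic_sub_Iic (μ := volume) (a := 0) (b := w)
        (f := fun t : ℝ => k0 t * exp (-(t ^ 2 / 2))) hIntg.integrableOn hIntg.integrableOn
      rw [← this]; simp [hG]
    rw [h1]
    refine HasDerivAt.const_add _ ?_
    exact intervalIntegral.integral_hasDerivAt_right hIntg.intervalIntegrable
      (hcont.stronglyMeasurableAtFilter _ _) hcont.continuousAt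
  have hGw : ∀ w, |G w| * |w| ≤ exp (-(w ^ 2 / 2)) := by
    intro w
    rcases lt_trichotomy w 0 with h | h | h
    · have h1 : G w = ∫ t in Set.Ioi (-w), k0 (-t) * exp (-(t ^ 2 / 2)) := by
        have := integral_comp_neg_Ioi (-w) (fun t : ℝ => k0 t * exp (-(t ^ 2 / 2)))
        rw [neg_neg] at this
        rw [hG]; simp only; rw [← this]; simp
      have h2 := psi_tail_bound (k0 := fun t => k0 (-t)) (by fun_prop) (fun t => hb (-t)) (-w)
        (by linarith)
      rw [h1, abs_of_neg h]; simpa using h2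
    · subst h; simp
    · have h1 : G w = -∫ t in Set.Ioi w, k0 t * exp (-(t ^ 2 / 2)) := by
        have := intervalIntegral.integral_Iic_add_Ioi (μ := volume) (b := w)
          (f := fun t : ℝ => k0 t * exp (-(t ^ 2 / 2))) hIntg.integrableOn hIntg.integrableOn
        rw [hz] at this
        rw [hG]; linarith
      rw [h1, abs_neg, abs_of_pos h]
      exact psi_tail_bound hc hb w h
  have hGb : ∀ w, |G w| ≤ √(2 * Real.pi) := by
    intro w
    rw [← psi_integral]
    calc |G w| ≤ ∫ t in Set.Iic w, exp (-(t ^ 2 / 2)) := by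
          rw [← Real.norm_eq_abs]
          refine norm_integral_le_of_norm_le psi_integrable.integrableOn ?_
          refine Eventually.of_forall fun t => ?_
          rw [Real.norm_eq_abs, abs_mul, abs_of_pos (exp_pos _)]
          nlinarith [exp_pos (-(t ^ 2 / 2)), hb t]
      _ ≤ _ := setIntegral_le_integral psi_integrable (Eventually.of_forall fun t => (exp_pos _).le)
  have hwf : ∀ w, |w * (exp (w ^ 2 / 2) * G w)| ≤ 1 := by
    intro w
    have h1 : exp (w ^ 2 / 2) * exp (-(w ^ 2 / 2)) = 1 := by rw [← exp_add]; simp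
    rw [abs_mul, abs_mul, abs_of_pos (exp_pos _), ← h1]
    nlinarith [hGw w, exp_pos (w ^ 2 / 2)]
  refine ⟨fun w => exp (w ^ 2 / 2) * G w, fun w => ?_, fun w => ⟨hwf w, ?_⟩⟩
  · have h1 : HasDerivAt (fun t : ℝ => t ^ 2 / 2) w w := by
      exact ((hasDerivAt_pow 2 w).div_const 2).congr_deriv (by simp)
    refine (h1.exp.mul (hGd w)).congr_deriv ?_
    have h1 : exp (w ^ 2 / 2) * exp (-(w ^ 2 / 2)) = 1 := by rw [← exp_add]; simp
    linear_combination (k0 w) * h1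
  · by_cases h : 1 ≤ |w|
    · have := hwf w
      rw [abs_mul] at this
      nlinarith [abs_nonneg (exp (w ^ 2 / 2) * G w)]
    · push Not at h
      rw [abs_mul, abs_of_pos (exp_pos _)]
      have hw2 : w ^ 2 / 2 ≤ 1 / 2 := by
        have := sq_abs w; nlinarith [abs_nonneg w]
      have he : exp (w ^ 2 / 2) ≤ 5 / 3 := by
        refine (exp_le_exp.2 hw2).trans ?_
        have h2 : exp (1 / 2 : ℝ) * exp (1 / 2) = exp 1 := by rw [← exp_add]; norm_num
        have := Real.exp_one_lt_d9
        nlinarith [exp_pos (1 / 2 : ℝ)]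
      have hs : √(2 * Real.pi) ≤ 3 := by
        rw [Real.sqrt_le_left (by norm_num)]
        have := Real.pi_lt_d2; linarith
      nlinarith [hGb w, abs_nonneg (G w), exp_pos (w ^ 2 / 2)]

theorem berry_esseen {h : ℝ → ℝ} (hc : Continuous h) (ha : Antitone h)
    (h0 : ∀ t, 0 ≤ h t) (h1 : ∀ t, h t ≤ 1) (c : ℝ)
    (hz : ∫ t, (h t - c) * exp (-(t ^ 2 / 2)) = 0) (hc0 : 0 ≤ c) (hc1 : c ≤ 1) (k : ℕ) :
    |radE (k + 1) (fun s => h (s / √((k : ℝ) + 1))) - c| ≤ 50 / √((k : ℝ) + 1) := by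
  obtain ⟨f, hf, hfb⟩ := stein_solution (k0 := fun t => h t - c) (by fun_prop)
    (fun t => abs_le.2 ⟨by linarith [h0 t], by linarith [h1 t]⟩) hz
  set r := √((k : ℝ) + 1) with hr
  have hrp : 0 < r := by positivity
  have hr2 : r * r = k + 1 := Real.mul_self_sqrt (by positivity)
  have hr1 : 1 ≤ r := by rw [hr, Real.one_le_sqrt]; linarith [(Nat.cast_nonneg k : (0 : ℝ) ≤ k)]
  set f' : ℝ → ℝ := fun w => w * f w + (h w - c) with hf'
  have hf'b : ∀ w, |f' w| ≤ 2 := by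
    intro w
    refine (abs_add_le _ _).trans ?_
    have := (hfb w).1
    have : |h w - c| ≤ 1 := abs_le.2 ⟨by linarith [h0 w], by linarith [h1 w]⟩
    linarith
  have hlip : ∀ x y, |f y - f x| ≤ 2 * |y - x| := by
    intro x y
    have := Convex.norm_image_sub_le_of_norm_hasDerivWithin_le (f := f) (f' := f') (s := Set.univ)
      (C := 2) (x := x) (y := y) (fun w _ => (hf w).hasDerivWithinAt) (fun w _ => hf'b w)
      convex_univ trivial trivial
    simpa [Real.norm_eq_abs] using this
  -- local estimate
  have key : ∀ a b ξ, a ≤ ξ → ξ ≤ b → ∀ x, (x = a ∨ x = b) →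
      |f' x - f' ξ| ≤ (b - a) * (5 + 2 * (|a| + (b - a))) + (h a - h b) := by
    intro a b ξ h1 h2 x hx
    have hxa : a ≤ x := by rcases hx with rfl | rfl <;> linarith
    have hxb : x ≤ b := by rcases hx with rfl | rfl <;> linarith
    have e : f' x - f' ξ = (x - ξ) * f x + ξ * (f x - f ξ) + (h x - h ξ) := by
      simp only [hf']; ring
    rw [e]
    refine (abs_add_le _ _).trans (add_le_add ((abs_add_le _ _).trans ?_) ?_)
    · rw [abs_mul, abs_mul]
      have e1 : |x - ξ| ≤ b - a := abs_le.2 ⟨by linarith, by linarith⟩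
      have e2 : |ξ| ≤ |a| + (b - a) := by
        have : ξ = a + (ξ - a) := by ring
        rw [this]
        refine (abs_add_le _ _).trans ?_
        rw [abs_of_nonneg (by linarith : 0 ≤ ξ - a)]; linarith
      have e3 := hlip ξ x
      have e4 := (hfb x).2
      have e5 : |x - ξ| * |f x| ≤ (b - a) * 5 :=
        mul_le_mul e1 e4 (abs_nonneg _) (by linarith)
      have e6 : |ξ| * |f x - f ξ| ≤ (|a| + (b - a)) * (2 * (b - a)) :=
        mul_le_mul e2 (by linarith) (abs_nonneg _) (by linarith [abs_nonneg a])
      nlinarith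
    · exact abs_le.2 ⟨by linarith [ha hxa, ha hxb, ha h1, ha h2],
        by linarith [ha hxa, ha hxb, ha h1, ha h2]⟩
  have main : radE (k + 1) (fun s => h (s / r)) - c =
      radE k (fun s => (f' ((s + 1) / r) + f' ((s - 1) / r)) / 2 -
        r / 2 * (f ((s + 1) / r) - f ((s - 1) / r))) := by
    have e1 : radE (k + 1) (fun s => h (s / r)) - c =
        radE (k + 1) (fun s => f' (s / r) - (1 / r) * (s * f (s / r))) := by
      have e0 := radE_sub (k + 1) (fun s => h (s / r)) (fun _ => c)
      rw [radE_const] at e0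
      rw [← e0]
      congr 1; funext s; simp only [hf']; field_simp; ring
    rw [e1, radE_sub, radE_smul, radE_stein k (fun s => f (s / r)), ← mul_assoc, radE,
      ← radE_smul, ← radE_sub]
    congr 1; funext s
    rw [← hr2]; field_simp
  rw [main]
  have hbd : ∀ s, |(f' ((s + 1) / r) + f' ((s - 1) / r)) / 2 -
        r / 2 * (f ((s + 1) / r) - f ((s - 1) / r))| ≤
      (22 / r + (4 / (r * r)) * |s|) + (-1) * (h ((s + 1) / r) - h ((s - 1) / r)) := by
    intro s
    set a := (s - 1) / r with haa
    set b := (s + 1) / r with hbb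
    have hba : b - a = 2 / r := by rw [haa, hbb]; field_simp; ring
    have hab : a < b := by have : 0 < 2 / r := by positivity
                           linarith
    obtain ⟨ξ, hξ, he⟩ := exists_hasDerivAt_eq_slope f f' hab
      (fun x _ => (hf x).continuousAt.continuousWithinAt) (fun x _ => hf x)
    have e1 : r / 2 * (f b - f a) = f' ξ := by
      rw [he, hba]; field_simp
    rw [e1]
    have ka := key a b ξ hξ.1.le hξ.2.le a (Or.inl rfl)
    have kb := key a b ξ hξ.1.le hξ.2.le b (Or.inr rfl)
    have e2 : (f' b + f' a) / 2 - f' ξ = (f' b - f' ξ) / 2 + (f' a - f' ξ) / 2 := by ring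
    rw [e2]
    refine (abs_add_le _ _).trans ?_
    rw [abs_div, abs_div, abs_of_pos (by norm_num : (0 : ℝ) < 2)]
    have e3 : |a| ≤ |s| / r + 1 / r := by
      rw [haa, abs_div, abs_of_pos hrp, ← add_div]
      gcongr
      refine (abs_sub _ _).trans ?_
      simp
    have e4 : (b - a) * (5 + 2 * (|a| + (b - a))) ≤ 22 / r + (4 / (r * r)) * |s| := by
      rw [hba]
      have e5 : 1 / r ≤ 1 := by rw [div_le_one hrp]; exact hr1
      have : 2 / r * (5 + 2 * (|a| + 2 / r)) ≤ 2 / r * (5 + 2 * ((|s| / r + 1 / r) + 2 / r)) := by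
        gcongr
      refine this.trans ?_
      have e7 : 2 / r * (5 + 2 * ((|s| / r + 1 / r) + 2 / r)) =
        10 / r + 12 / r * (1 / r) + 4 / (r * r) * |s| := by field_simp; ring
      have e8 : 12 / r * (1 / r) ≤ 12 / r * 1 := by gcongr
      rw [e7]
      have e9 : 10 / r + 12 / r * 1 = 22 / r := by ring
      linarith
    linarith
  refine (radE_abs_le k hbd).trans ?_
  rw [radE_add, radE_add, radE_const, radE_smul, radE_smul]
  have t1 := radE_tv k (fun s => h (s / r)) (fun s => abs_le.2 ⟨by linarith [h0 (s / r)], h1 _⟩)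
  rw [← hr] at t1
  have t2 : radE k (fun s => |s|) ≤ r := (radE_abs k).trans (Real.sqrt_le_sqrt (by linarith))
  have t3 : 4 / (r * r) * radE k (fun s => |s|) ≤ 4 / (r * r) * r := by gcongr
  have t4 : 4 / (r * r) * r = 4 / r := by field_simp
  have t5 := neg_abs_le (radE k (fun s => h ((s + 1) / r) - h ((s - 1) / r)))
  have t6 : 50 / r = 22 / r + 4 / r + 2 / r + 22 / r := by ring
  have t7 : 0 < 22 / r := by positivity
  linarith

/-- standard normal cdf -/
noncomputable abbrev Phi (x : ℝ) : ℝ := ProbabilityTheory.cdf (ProbabilityTheory.gaussianReal 0 1) x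

theorem Phi_eq (y : ℝ) : Phi y = (√(2 * Real.pi))⁻¹ * ∫ t in Set.Iic y, exp (-(t ^ 2 / 2)) := by
  rw [Phi, cdf_eq_real, measureReal_def, gaussianReal_apply_eq_integral _ (by norm_num)]
  rw [ENNReal.toReal_ofReal]
  · rw [← integral_const_mul]
    congr 1; funext t
    simp [gaussianPDFReal]; left; ring
  · exact integral_nonneg fun t => gaussianPDFReal_nonneg _ _ _

theorem Phi_lower {Y a b : ℝ} (hab : a ≤ b) (ha : -Y ≤ a) (hb : b ≤ Y) :
    (√(2 * Real.pi))⁻¹ * exp (-(Y ^ 2 / 2)) * (b - a) ≤ Phi b - Phi a := by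
  rw [Phi_eq, Phi_eq, ← mul_sub, mul_assoc]
  refine mul_le_mul_of_nonneg_left ?_ (by positivity)
  rw [intervalIntegral.integral_Iic_sub_Iic psi_integrable.integrableOn psi_integrable.integrableOn]
  have := intervalIntegral.integral_mono_on (μ := volume) (f := fun _ => exp (-(Y ^ 2 / 2)))
    (g := fun t => exp (-(t ^ 2 / 2))) hab (by simp) psi_integrable.intervalIntegrable
    (fun t ht => exp_le_exp.2 (by nlinarith [ht.1, ht.2]))
  rw [intervalIntegral.integral_const, smul_eq_mul] at this
  linarith

theorem integral_exp_neg_abs' (lam y : ℝ) (hl : 0 < lam) :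
    Integrable (fun w : ℝ => exp (-(lam * |w - y|))) ∧
    ∫ w : ℝ, exp (-(lam * |w - y|)) = 2 / lam := by
  have h1 : ∫ w : ℝ, exp (-(lam * |w - y|)) = 2 / lam := by
    rw [integral_sub_right_eq_self (fun w : ℝ => exp (-(lam * |w|))) y,
      integral_comp_abs (f := fun w : ℝ => exp (-(lam * w)))]
    have := integral_exp_mul_Ioi (a := -lam) (by linarith) 0
    simp only [neg_mul, mul_zero] at this
    rw [this]; simp; field_simp
  refine ⟨?_, h1⟩
  by_contra hn
  rw [integral_undef hn] at h1
  have : 0 < 2 / lam := by positivity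
  linarith

theorem radE_approx {g : ℝ → ℝ} (hgc : Continuous g) (hgm : Monotone g) (hg0 : ∀ u, 0 ≤ g u)
    (hg1 : ∀ u, g u ≤ 1) {B : ℝ} (hB : ∀ u, |g u - (if 0 ≤ u then 1 else 0)| ≤ B * exp (-|u|))
    {b : ℝ} (hb : 0 < b) (τ : ℝ) (k : ℕ) :
    |radE (k + 1) (fun s => g (τ + b * s)) - Phi (τ / (b * √((k : ℝ) + 1)))| ≤
      (50 + 2 * B / b) / √((k : ℝ) + 1) := by
  set r := √((k : ℝ) + 1) with hr
  have hrp : 0 < r := by positivity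
  set lam := b * r with hlam
  have hl : 0 < lam := by positivity
  set y := τ / lam with hy
  set h : ℝ → ℝ := fun w => g (lam * (y - w)) with hh
  have hhc : Continuous h := by fun_prop
  have hhb : ∀ t, |h t| ≤ 1 := fun t => abs_le.2 ⟨by linarith [hg0 (lam * (y - t))], hg1 _⟩
  have hsp : 0 < √(2 * Real.pi) := by positivity
  set c := (√(2 * Real.pi))⁻¹ * ∫ t, h t * exp (-(t ^ 2 / 2)) with hcdef
  have hIntg := kpsi_integrable hhc hhb
  have hc0 : 0 ≤ c := mul_nonneg (by positivity)
    (integral_nonneg fun t => mul_nonneg (hg0 _) (exp_pos _).le)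
  have hc1 : c ≤ 1 := by
    rw [hcdef, inv_mul_le_iff₀ hsp, mul_one, ← psi_integral]
    refine integral_mono hIntg psi_integrable fun t => ?_
    have := hg1 (lam * (y - t))
    simp only [hh]
    nlinarith [exp_pos (-(t ^ 2 / 2))]
  have hz : ∫ t, (h t - c) * exp (-(t ^ 2 / 2)) = 0 := by
    have : (fun t => (h t - c) * exp (-(t ^ 2 / 2))) =
      fun t => h t * exp (-(t ^ 2 / 2)) - c * exp (-(t ^ 2 / 2)) := by funext t; ring
    rw [this, integral_sub hIntg (psi_integrable.const_mul c), integral_const_mul, psi_integral,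
      hcdef]
    field_simp; ring
  have hanti : Antitone h := fun s t hst => hgm (by nlinarith)
  have hbe := berry_esseen hhc hanti (fun t => hg0 _) (fun t => hg1 _) c hz hc0 hc1 k
  rw [← hr] at hbe
  have e1 : radE (k + 1) (fun s => g (τ + b * s)) = radE (k + 1) (fun s => h (s / r)) := by
    rw [← radE_neg (k + 1) (fun s => g (τ + b * s))]
    congr 1; funext s
    simp only [hh]; congr 1
    rw [hy, hlam]; field_simp; ring
  rw [e1]
  have hce : |c - Phi y| ≤ 2 * B / lam := by
    obtain ⟨i1, i2⟩ := integral_exp_neg_abs' lam y hl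
    rw [Phi_eq, hcdef, ← mul_sub, ← integral_indicator measurableSet_Iic,
      ← integral_sub hIntg (psi_integrable.indicator measurableSet_Iic)]
    have hs1 : (√(2 * Real.pi))⁻¹ ≤ 1 := by
      apply inv_le_one_of_one_le₀
      rw [Real.one_le_sqrt]; linarith [Real.pi_gt_three]
    rw [abs_mul, abs_of_pos (inv_pos.2 hsp)]
    have i3 : |∫ t, (h t * exp (-(t ^ 2 / 2)) -
        (Set.Iic y).indicator (fun t => exp (-(t ^ 2 / 2))) t)| ≤
        ∫ t, B * exp (-(lam * |t - y|)) := by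
      rw [← Real.norm_eq_abs]
      refine norm_integral_le_of_norm_le (i1.const_mul B) (Eventually.of_forall fun t => ?_)
      have := hB (lam * (y - t))
      rw [abs_mul, abs_of_pos hl, abs_sub_comm y t] at this
      have e2 : h t * exp (-(t ^ 2 / 2)) - (Set.Iic y).indicator (fun t => exp (-(t ^ 2 / 2))) t =
        (g (lam * (y - t)) - (if 0 ≤ lam * (y - t) then 1 else 0)) * exp (-(t ^ 2 / 2)) := by
        by_cases hty : t ≤ y
        · rw [Set.indicator_of_mem (by exact hty), if_pos (mul_nonneg hl.le (by linarith))]; ring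
        · rw [Set.indicator_of_notMem (by exact hty), if_neg (by push Not at hty ⊢; nlinarith)]; ring
      rw [e2, Real.norm_eq_abs, abs_mul, abs_of_pos (exp_pos _)]
      have e3 : exp (-(t ^ 2 / 2)) ≤ 1 := exp_le_one_iff.2 (by nlinarith [sq_nonneg t])
      refine le_trans ?_ this
      exact mul_le_of_le_one_right (abs_nonneg _) e3
    rw [integral_const_mul, i2] at i3
    have := mul_le_of_le_one_left (abs_nonneg (∫ t, (h t * exp (-(t ^ 2 / 2)) -
        (Set.Iic y).indicator (fun t => exp (-(t ^ 2 / 2))) t))) hs1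
    refine this.trans (i3.trans (le_of_eq ?_))
    ring
  have e4 : radE (k + 1) (fun s => h (s / r)) - Phi y =
    (radE (k + 1) (fun s => h (s / r)) - c) + (c - Phi y) := by ring
  rw [e4]
  refine (abs_add_le _ _).trans ?_
  have e5 : (50 + 2 * B / b) / r = 50 / r + 2 * B / lam := by rw [hlam]; field_simp
  rw [e5]; linarith

/-- probability that a word of probability `x` is not filled by `m+1` strings -/
noncomputable def unf (m : ℕ) (x : ℝ) : ℝ := (1 - x) ^ m * (1 + m * x)

/-- probability of being filled, extended to `x > 1` -/
noncomputable def filP (m : ℕ) (x : ℝ) : ℝ := 1 - unf m (min x 1)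

theorem unf_hasDerivAt (j : ℕ) (x : ℝ) :
    HasDerivAt (unf (j + 1)) (-(((j : ℝ) + 1) * (j + 2) * x * (1 - x) ^ j)) x := by
  have h1 : HasDerivAt (fun y : ℝ => (1 - y) ^ (j + 1)) (((j + 1 : ℕ) : ℝ) * (1 - x) ^ j * (-1)) x := by
    exact (((hasDerivAt_id x).const_sub 1).pow (j + 1)).congr_deriv (by simp)
  have h2 : HasDerivAt (fun y : ℝ => 1 + ((j + 1 : ℕ) : ℝ) * y) (((j + 1 : ℕ) : ℝ)) x := by
    simpa using ((hasDerivAt_id x).const_mul ((j + 1 : ℕ) : ℝ)).const_add 1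
  refine (h1.mul h2).congr_deriv ?_
  push_cast; ring

theorem unf_anti (m : ℕ) (hm : 1 ≤ m) : AntitoneOn (unf m) (Set.Icc 0 1) := by
  obtain ⟨j, rfl⟩ : ∃ j, m = j + 1 := ⟨m - 1, by omega⟩
  refine antitoneOn_of_deriv_nonpos (convex_Icc 0 1)
    (fun x _ => (unf_hasDerivAt j x).continuousAt.continuousWithinAt)
    (fun x _ => (unf_hasDerivAt j x).differentiableAt.differentiableWithinAt) (fun x hx => ?_)
  rw [interior_Icc] at hx
  rw [(unf_hasDerivAt j x).deriv]
  have : 0 ≤ 1 - x := by linarith [hx.2]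
  have := hx.1.le
  have : 0 ≤ ((j : ℝ) + 1) * (j + 2) * x * (1 - x) ^ j := by positivity
  linarith

theorem unf_zero (m : ℕ) : unf m 0 = 1 := by simp [unf]

theorem unf_nonneg (m : ℕ) {x : ℝ} (h0 : 0 ≤ x) (h1 : x ≤ 1) : 0 ≤ unf m x := by
  have : 0 ≤ 1 - x := by linarith
  unfold unf; positivity

theorem unf_le_one (m : ℕ) (hm : 1 ≤ m) {x : ℝ} (h0 : 0 ≤ x) (h1 : x ≤ 1) : unf m x ≤ 1 := by
  rw [← unf_zero m]
  exact unf_anti m hm ⟨le_rfl, by norm_num⟩ ⟨h0, h1⟩ h0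

theorem one_sub_unf_le (m : ℕ) {x : ℝ} (h0 : 0 ≤ x) (h1 : x ≤ 1) :
    1 - unf m x ≤ ((m : ℝ) + 1) * x := by
  have hm : (0 : ℝ) ≤ m := Nat.cast_nonneg m
  by_cases h : (m : ℝ) * x ≤ 1
  · have hb := one_add_mul_le_pow (a := -x) (by linarith) m
    have e : (1 : ℝ) + -x = 1 - x := by ring
    rw [e] at hb
    have : (1 + m * -x) * (1 + m * x) ≤ unf m x := by
      unfold unf
      exact mul_le_mul_of_nonneg_right hb (by positivity)
    nlinarith [mul_nonneg hm h0]
  · have := unf_nonneg m h0 h1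
    nlinarith

theorem unf_le (m : ℕ) (hm : 1 ≤ m) {x : ℝ} (h0 : 0 < x) (h1 : x ≤ 1) :
    unf m x ≤ 4 / (((m : ℝ) + 1) * x) := by
  have hm' : (1 : ℝ) ≤ m := by exact_mod_cast hm
  set y := (m : ℝ) * x with hy
  have hyp : 0 < y := by positivity
  have hp : (1 - x) ^ m ≤ exp (-y) := by
    have : 1 - x ≤ exp (-x) := by have := add_one_le_exp (-x); linarith
    calc (1 - x) ^ m ≤ exp (-x) ^ m := pow_le_pow_left₀ (by linarith) this m
      _ = exp (-y) := by rw [← exp_nat_mul, hy]; congr 1; ring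
  have h2 : unf m x ≤ exp (-y) * (1 + y) := by
    unfold unf; exact mul_le_mul_of_nonneg_right hp (by positivity)
  have h3 : exp (-y) * (1 + y) ≤ 2 / y := by
    rw [le_div_iff₀ hyp, exp_neg]
    have := quadratic_le_exp_of_nonneg hyp.le
    rw [mul_assoc, inv_mul_le_iff₀ (exp_pos _)]
    nlinarith
  refine h2.trans (h3.trans ?_)
  rw [div_le_div_iff₀ hyp (by positivity)]
  rw [hy]; nlinarith

theorem unf_drop {ρ M : ℝ} (hρ : 0 < ρ) (hρ1 : ρ < 1) (hM : 1 ≤ M) :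
    ∃ c > 0, ∀ᶠ m : ℕ in atTop, ∀ x, 1 / M ≤ ((m : ℝ) + 1) * x → ((m : ℝ) + 1) * x ≤ M →
      x ≤ 1 ∧ c ≤ unf m (ρ * x) - unf m x := by
  refine ⟨ρ * (1 - ρ) / (2 * M ^ 2) * exp (-(2 * M)), by
    have : 0 < 1 - ρ := by linarith
    positivity, ?_⟩
  filter_upwards [eventually_ge_atTop (⌈2 * M⌉₊ + 1)] with m hm x hx1 hx2
  obtain ⟨j, rfl⟩ : ∃ j, m = j + 1 := ⟨m - 1, by omega⟩
  have hj : 2 * M ≤ (j : ℝ) := (Nat.le_ceil _).trans (by exact_mod_cast (by omega))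
  push_cast at hx1 hx2
  rw [div_le_iff₀ (by linarith)] at hx1
  set N : ℝ := (j : ℝ) + 1 + 1 with hN
  have hNp : 0 < N := by positivity
  have hxp : 0 < x := by
    by_contra hneg
    push Not at hneg
    have : N * x * M ≤ 0 := mul_nonpos_of_nonpos_of_nonneg
      (mul_nonpos_of_nonneg_of_nonpos hNp.le hneg) (by linarith)
    linarith
  have hxh : x ≤ 1 / 2 := by
    by_contra hneg
    push Not at hneg
    nlinarith
  refine ⟨by linarith, ?_⟩
  have hlt : ρ * x < x := by nlinarith
  obtain ⟨ξ, hξ, he⟩ := exists_hasDerivAt_eq_slope (unf (j + 1))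
    (fun x => (-(((j : ℝ) + 1) * (j + 2) * x * (1 - x) ^ j))) hlt
    (fun x _ => (unf_hasDerivAt j x).continuousAt.continuousWithinAt)
    (fun x _ => unf_hasDerivAt j x)
  have hξ0 : 0 < ξ := lt_trans (by positivity) hξ.1
  rw [eq_div_iff (by linarith)] at he
  have he' : unf (j + 1) (ρ * x) - unf (j + 1) x =
      ((j : ℝ) + 1) * (j + 2) * ξ * (1 - ξ) ^ j * (x - ρ * x) := by linarith
  rw [he']
  have hz : exp (-(2 * x)) ≤ 1 - x := by
    rw [exp_neg, inv_le_comm₀ (exp_pos _) (by linarith)]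
    have h1 := add_one_le_exp (2 * x)
    refine le_trans ?_ h1
    rw [inv_le_iff_one_le_mul₀ (by linarith)]
    nlinarith
  have hpow : exp (-(2 * M)) ≤ (1 - ξ) ^ j := by
    calc exp (-(2 * M)) ≤ exp (-(2 * x)) ^ j := by
          rw [← exp_nat_mul]
          apply exp_le_exp.2
          nlinarith
      _ ≤ (1 - x) ^ j := pow_le_pow_left₀ (exp_pos _).le hz j
      _ ≤ (1 - ξ) ^ j := pow_le_pow_left₀ (by linarith) (by linarith [hξ.2]) j
  have e1 : 1 / M ≤ N * x := by rw [div_le_iff₀ (by linarith)]; exact hx1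
  have e2 : ρ * (1 - ρ) / (2 * M ^ 2) ≤ ((j : ℝ) + 1) * (j + 2) * ξ * (x - ρ * x) := by
    have f1 : ((j : ℝ) + 1) * (j + 2) * (ρ * x) * (x - ρ * x) ≤
        ((j : ℝ) + 1) * (j + 2) * ξ * (x - ρ * x) := by
      have := hξ.1.le
      have : 0 ≤ x - ρ * x := by linarith
      gcongr
    have f2 : ((j : ℝ) + 1) * (j + 2) * (ρ * x) * (x - ρ * x) =
        (ρ * (1 - ρ)) * ((((j : ℝ) + 1) * N) * x ^ 2) := by rw [hN]; ring
    have f3 : N / 2 ≤ (j : ℝ) + 1 := by rw [hN]; linarith [(Nat.cast_nonneg j : (0 : ℝ) ≤ j)]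
    have f4 : 1 / (2 * M ^ 2) ≤ (((j : ℝ) + 1) * N) * x ^ 2 := by
      calc 1 / (2 * M ^ 2) = (1 / M) * (1 / M) / 2 := by field_simp
        _ ≤ (N * x) * (N * x) / 2 := by gcongr
        _ = (N / 2 * N) * x ^ 2 := by ring
        _ ≤ _ := by gcongr
    have : 0 < ρ * (1 - ρ) := mul_pos hρ (by linarith)
    calc ρ * (1 - ρ) / (2 * M ^ 2) = (ρ * (1 - ρ)) * (1 / (2 * M ^ 2)) := by ring
      _ ≤ (ρ * (1 - ρ)) * ((((j : ℝ) + 1) * N) * x ^ 2) := by gcongr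
      _ ≤ _ := by rw [← f2]; exact f1
  have h9 : 0 ≤ ρ * (1 - ρ) / (2 * M ^ 2) := by
    have : 0 < 1 - ρ := by linarith
    positivity
  calc _ ≤ ((j : ℝ) + 1) * (j + 2) * ξ * (x - ρ * x) * (1 - ξ) ^ j :=
        mul_le_mul e2 hpow (exp_pos _).le (h9.trans e2)
    _ = _ := by ring

theorem filP_mono (m : ℕ) (hm : 1 ≤ m) {x y : ℝ} (h0 : 0 ≤ x) (hxy : x ≤ y) :
    filP m x ≤ filP m y := by
  unfold filP
  have := unf_anti m hm (a := min x 1) (b := min y 1) ⟨le_min h0 zero_le_one, min_le_right _ _⟩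
    ⟨le_min (h0.trans hxy) zero_le_one, min_le_right _ _⟩ (min_le_min_right 1 hxy)
  linarith

theorem filP_nonneg (m : ℕ) (hm : 1 ≤ m) {x : ℝ} (h0 : 0 ≤ x) : 0 ≤ filP m x := by
  have := unf_le_one m hm (x := min x 1) (le_min h0 zero_le_one) (min_le_right _ _)
  unfold filP; linarith

theorem filP_le_one (m : ℕ) {x : ℝ} (h0 : 0 ≤ x) : filP m x ≤ 1 := by
  have := unf_nonneg m (x := min x 1) (le_min h0 zero_le_one) (min_le_right _ _)
  unfold filP; linarith

theorem filP_le (m : ℕ) {x : ℝ} (h0 : 0 ≤ x) : filP m x ≤ ((m : ℝ) + 1) * x := by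
  have := one_sub_unf_le m (x := min x 1) (le_min h0 zero_le_one) (min_le_right _ _)
  unfold filP
  refine this.trans ?_
  have := min_le_left x 1
  gcongr

theorem one_sub_filP_le (m : ℕ) (hm : 1 ≤ m) {x : ℝ} (h0 : 0 < x) :
    1 - filP m x ≤ 4 / (((m : ℝ) + 1) * x) := by
  unfold filP
  rcases le_total x 1 with h | h
  · rw [min_eq_left h]; have := unf_le m hm h0 h; linarith
  · rw [min_eq_right h]
    have : unf m 1 = 0 := by simp [unf]; left; omega
    rw [this]
    have : 0 ≤ 4 / (((m : ℝ) + 1) * x) := by positivity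
    linarith

theorem filP_log_bound (m : ℕ) (hm : 1 ≤ m) (u : ℝ) :
    |filP m (exp u / ((m : ℝ) + 1)) - (if 0 ≤ u then 1 else 0)| ≤ 4 * exp (-|u|) := by
  have hx : 0 < exp u / ((m : ℝ) + 1) := by positivity
  have hmx : ((m : ℝ) + 1) * (exp u / ((m : ℝ) + 1)) = exp u := by field_simp
  split_ifs with h
  · have := one_sub_filP_le m hm hx
    rw [hmx] at this
    rw [abs_sub_comm, abs_of_nonneg (by linarith [filP_le_one m hx.le]), abs_of_nonneg h, exp_neg]
    exact this
  · push Not at h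
    have := filP_le m hx.le
    rw [hmx] at this
    rw [sub_zero, abs_of_nonneg (filP_nonneg m hm hx.le), abs_of_neg h, neg_neg]
    linarith [exp_pos u]

/-- expected proportion of filled words at level `k`, with `m+1` strings -/
noncomputable def aLev (L γ : ℝ) (m k : ℕ) : ℝ :=
  radE k (fun s => filP m (exp (-(k * L) + γ / 2 * s)))

theorem aLev_succ (L γ : ℝ) (m k : ℕ) : aLev L γ m (k + 1) =
    radE k (fun s => (filP m (exp (-L + γ / 2) * exp (-(k * L) + γ / 2 * s)) +
      filP m (exp (-L - γ / 2) * exp (-(k * L) + γ / 2 * s))) / 2) := by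
  unfold aLev
  rw [radE]
  congr 1; funext s
  rw [← exp_add, ← exp_add]
  push_cast
  congr 4 <;> ring

theorem aLev_step (L γ : ℝ) (m k : ℕ) : aLev L γ m k - aLev L γ m (k + 1) =
    radE k (fun s => filP m (exp (-(k * L) + γ / 2 * s)) -
      (filP m (exp (-L + γ / 2) * exp (-(k * L) + γ / 2 * s)) +
      filP m (exp (-L - γ / 2) * exp (-(k * L) + γ / 2 * s))) / 2) := by
  rw [aLev_succ, aLev, ← radE_sub]

theorem aLev_abs (L γ : ℝ) (m k : ℕ) : aLev L γ m k =
    radE k (fun s => filP m (exp ((log ((m : ℝ) + 1) - k * L) + |γ| / 2 * s) / ((m : ℝ) + 1))) := by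
  have hm : (0 : ℝ) < (m : ℝ) + 1 := by positivity
  have e : ∀ s, exp ((log ((m : ℝ) + 1) - k * L) + |γ| / 2 * s) / ((m : ℝ) + 1) =
      exp (-(k * L) + |γ| / 2 * s) := by
    intro s
    rw [show (log ((m : ℝ) + 1) - k * L) + |γ| / 2 * s =
      log ((m : ℝ) + 1) + (-(k * L) + |γ| / 2 * s) by ring, exp_add, exp_log hm]
    field_simp
  simp only [e]
  unfold aLev
  rcases abs_choice γ with h | h
  · rw [h]
  · rw [h, ← radE_neg]
    congr 1; funext s; congr 3; ring

theorem drop_nonneg (m : ℕ) (hm : 1 ≤ m) {p q x : ℝ} (hp0 : 0 < p) (hq0 : 0 < q) (hp : p < 1)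
    (hq : q < 1) (hx : 0 ≤ x) : 0 ≤ filP m x - (filP m (p * x) + filP m (q * x)) / 2 := by
  have h1 := filP_mono m hm (x := p * x) (y := x) (by positivity) (by nlinarith)
  have h2 := filP_mono m hm (x := q * x) (y := x) (by positivity) (by nlinarith)
  linarith

theorem drop_pos {p q M : ℝ} (hp0 : 0 < p) (hq0 : 0 < q) (hp : p < 1) (hq : q < 1) (hM : 1 ≤ M) :
    ∃ c > 0, ∀ᶠ m : ℕ in atTop, ∀ x, 1 / M ≤ ((m : ℝ) + 1) * x → ((m : ℝ) + 1) * x ≤ M →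
      c ≤ filP m x - (filP m (p * x) + filP m (q * x)) / 2 := by
  obtain ⟨c, hc, h⟩ := unf_drop hp0 hp hM
  refine ⟨c / 2, by positivity, ?_⟩
  filter_upwards [h, eventually_ge_atTop 1] with m hm hm1 x hx1 hx2
  obtain ⟨hx, hd⟩ := hm x hx1 hx2
  have hx0 : 0 ≤ x := by
    by_contra hneg
    push Not at hneg
    have : 0 < 1 / M := by positivity
    have : ((m : ℝ) + 1) * x ≤ 0 := mul_nonpos_of_nonneg_of_nonpos (by positivity) hneg.le
    linarith
  have h2 := filP_mono m hm1 (x := q * x) (y := x) (by positivity) (by nlinarith)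
  have e1 : filP m x = 1 - unf m x := by rw [filP, min_eq_left hx]
  have e2 : filP m (p * x) = 1 - unf m (p * x) := by rw [filP, min_eq_left (by nlinarith)]
  linarith

theorem aLev_approx {L γ : ℝ} (hγ : γ ≠ 0) (m : ℕ) (hm : 1 ≤ m) (k : ℕ) :
    |aLev L γ m (k + 1) -
      Phi ((log ((m : ℝ) + 1) - ((k : ℝ) + 1) * L) / (|γ| / 2 * √((k : ℝ) + 1)))| ≤
      (50 + 2 * 4 / (|γ| / 2)) / √((k : ℝ) + 1) := by
  have hg : 0 < |γ| := abs_pos.2 hγ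
  have := radE_approx (g := fun u => filP m (exp u / ((m : ℝ) + 1)))
    (by unfold filP unf; fun_prop)
    (fun u v huv => filP_mono m hm (by positivity) (by gcongr))
    (fun u => filP_nonneg m hm (by positivity)) (fun u => filP_le_one m (by positivity))
    (filP_log_bound m hm) (b := |γ| / 2) (by positivity) (log ((m : ℝ) + 1) - ((k : ℝ) + 1) * L) k
  rw [aLev_abs]
  push_cast
  exact this

theorem ramp_facts : Continuous (fun u : ℝ => max 0 (min u 1)) ∧
    Monotone (fun u : ℝ => max 0 (min u 1)) ∧ (∀ u : ℝ, 0 ≤ max 0 (min u 1)) ∧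
    (∀ u : ℝ, max 0 (min u 1) ≤ 1) ∧
    ∀ u : ℝ, |max 0 (min u 1) - (if 0 ≤ u then 1 else 0)| ≤ 3 * exp (-|u|) := by
  refine ⟨by fun_prop, fun u v h => max_le_max_left _ (min_le_min_right _ h),
    fun u => le_max_left _ _, fun u => max_le (by norm_num) (min_le_right _ _), fun u => ?_⟩
  split_ifs with h
  · rw [abs_of_nonneg h]
    by_cases h1 : 1 ≤ u
    · rw [min_eq_right h1]; simp; positivity
    · push Not at h1
      rw [min_eq_left h1.le, max_eq_right h, abs_of_nonpos (by linarith)]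
      have h2 : exp (-1 : ℝ) ≤ exp (-u) := exp_le_exp.2 (by linarith)
      have h3 : 1 ≤ 3 * exp (-1 : ℝ) := by
        rw [exp_neg, ← div_eq_mul_inv, le_div_iff₀ (exp_pos _)]
        linarith [Real.exp_one_lt_d9]
      linarith
  · push Not at h
    rw [min_eq_left (by linarith), max_eq_left h.le]; simp; positivity

theorem aLev_step_lower {L γ : ℝ} (hγ : γ ≠ 0) (hp : -L + γ / 2 < 0) (hq : -L - γ / 2 < 0)
    (Y : ℝ) :
    ∃ c > 0, ∃ k0 : ℕ, ∀ᶠ m : ℕ in atTop, ∀ k : ℕ, k0 ≤ k →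
      |(log ((m : ℝ) + 1) - ((k : ℝ) + 1) * L) / (|γ| / 2 * √((k : ℝ) + 1))| ≤ Y →
      c / √((k : ℝ) + 1) ≤ aLev L γ m (k + 1) - aLev L γ m (k + 1 + 1) := by
  set β := |γ| / 2 with hβ
  have hβp : 0 < β := by have := abs_pos.2 hγ; positivity
  obtain ⟨rc, rm, r0, r1, rb⟩ := ramp_facts
  set φ := (√(2 * Real.pi))⁻¹ * exp (-((Y + 1) ^ 2 / 2)) with hφ
  have hφp : 0 < φ := by positivity
  set C1 := 50 + 2 * 3 / β with hC1
  have hC1p : 0 < C1 := by positivity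
  -- width of the window
  set A := β * (2 * C1 + 1) / φ with hA
  have hAp : 0 < A := by positivity
  set M := exp (A + 1) with hM
  have hM1 : 1 ≤ M := one_le_exp (by linarith)
  obtain ⟨c, hc, hd⟩ := drop_pos (exp_pos (-L + γ / 2)) (exp_pos (-L - γ / 2))
    (by rw [← exp_zero]; exact exp_lt_exp.2 hp) (by rw [← exp_zero]; exact exp_lt_exp.2 hq) hM1
  refine ⟨c, hc, ⌈(A / β) ^ 2⌉₊, ?_⟩
  filter_upwards [hd, eventually_ge_atTop 1] with m hm hm1 k hk hy
  set r := √((k : ℝ) + 1) with hr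
  have hrp : 0 < r := by positivity
  have hrA : A / β ≤ r := by
    rw [hr]; apply Real.le_sqrt_of_sq_le
    have : (A / β) ^ 2 ≤ k := (Nat.le_ceil _).trans (by exact_mod_cast hk)
    linarith
  set τ := log ((m : ℝ) + 1) - ((k : ℝ) + 1) * L with hτ
  have a1 := radE_approx rc rm r0 r1 rb hβp τ k
  have a2 := radE_approx rc rm r0 r1 rb hβp (τ - A) k
  rw [← hr, ← hC1] at a1 a2
  set y := τ / (β * r) with hyd
  set δ := A / (β * r) with hδ
  have hδp : 0 < δ := by positivity
  have hδ1 : δ ≤ 1 := by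
    rw [hδ, ← div_div, div_le_one hrp]; exact hrA
  have e1 : (τ - A) / (β * r) = y - δ := by rw [hyd, hδ]; ring
  rw [e1] at a2
  have a3 := Phi_lower (Y := Y + 1) (a := y - δ) (b := y) (by linarith)
    (by linarith [(abs_le.1 hy).1]) (by linarith [(abs_le.1 hy).2])
  rw [← hφ] at a3
  have e2 : φ * (y - (y - δ)) = 2 * C1 / r + 1 / r := by
    rw [hδ, hA]; field_simp; ring
  rw [e2] at a3
  have a4 : 1 / r ≤ radE (k + 1) (fun s => max 0 (min (τ + β * s) 1)) -
      radE (k + 1) (fun s => max 0 (min (τ - A + β * s) 1)) := by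
    have := (abs_le.1 a1).1
    have := (abs_le.1 a2).2
    have e3 : 2 * C1 / r = C1 / r + C1 / r := by ring
    linarith
  rw [← radE_sub] at a4
  have a5 : radE (k + 1) (fun s => c * (max 0 (min (τ + β * s) 1) - max 0 (min (τ - A + β * s) 1)))
      ≤ radE (k + 1) (fun s => filP m (exp (-((k + 1 : ℕ) * L) + |γ| / 2 * s)) -
      (filP m (exp (-L + γ / 2) * exp (-((k + 1 : ℕ) * L) + |γ| / 2 * s)) +
      filP m (exp (-L - γ / 2) * exp (-((k + 1 : ℕ) * L) + |γ| / 2 * s))) / 2) := by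
    apply radE_mono
    intro s
    set u := τ + β * s with hu
    have e4 : τ - A + β * s = u - A := by rw [hu]; ring
    rw [e4]
    set x := exp (-((k + 1 : ℕ) * L) + |γ| / 2 * s) with hx
    have hxu : ((m : ℝ) + 1) * x = exp u := by
      have hmp : (0 : ℝ) < (m : ℝ) + 1 := by positivity
      rw [hx, hu, hτ]
      nth_rewrite 1 [← exp_log hmp]
      rw [← exp_add]; congr 1; push_cast; ring
    have hn := drop_nonneg m hm1 (x := x) (exp_pos (-L + γ / 2)) (exp_pos (-L - γ / 2))
      (by rw [← exp_zero]; exact exp_lt_exp.2 hp) (by rw [← exp_zero]; exact exp_lt_exp.2 hq) (exp_pos _).le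
    by_cases h0 : u < 0
    · rw [min_eq_left (by linarith), max_eq_left h0.le, min_eq_left (by linarith),
        max_eq_left (by linarith)]
      simpa using hn
    by_cases h1 : A + 1 < u
    · rw [min_eq_right (by linarith), min_eq_right (by linarith)]
      simpa using hn
    push Not at h0 h1
    have hh := hm x (by
      rw [hxu]; have := one_le_exp h0
      refine le_trans ?_ this
      rw [div_le_one (by linarith)]; exact hM1) (by rw [hxu, hM]; exact exp_le_exp.2 h1)
    refine le_trans ?_ hh
    have := r1 u
    have := r0 (u - A)
    nlinarith
  have a6 : aLev L γ m (k + 1) - aLev L γ m (k + 1 + 1) =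
      radE (k + 1) (fun s => filP m (exp (-((k + 1 : ℕ) * L) + |γ| / 2 * s)) -
      (filP m (exp (-L + γ / 2) * exp (-((k + 1 : ℕ) * L) + |γ| / 2 * s)) +
      filP m (exp (-L - γ / 2) * exp (-((k + 1 : ℕ) * L) + |γ| / 2 * s))) / 2) := by
    rw [aLev_step]
    rcases abs_choice γ with h | h
    · rw [h]
    · rw [h, ← radE_neg]
      congr 1; funext s
      rw [show γ / 2 * -s = -γ / 2 * s by ring]
  rw [a6]
  refine le_trans ?_ a5
  rw [radE_smul]
  calc c / r = c * (1 / r) := by ring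
    _ ≤ _ := mul_le_mul_of_nonneg_left a4 hc.le

noncomputable def Kf (L γ x t : ℝ) : ℝ := t / L - |γ| / (2 * L ^ ((3 : ℝ) / 2)) * x * √t

theorem Kf_tendsto (L γ x : ℝ) (hL : 0 < L) :
    Tendsto (fun m : ℕ => Kf L γ x (log ((m : ℝ) + 1))) atTop atTop := by
  have ht : Tendsto (fun m : ℕ => √(log ((m : ℝ) + 1))) atTop atTop := by
    refine Real.tendsto_sqrt_atTop.comp (Real.tendsto_log_atTop.comp ?_)
    exact tendsto_atTop_add_const_right _ _ tendsto_natCast_atTop_atTop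
  have h2 : Tendsto (fun T : ℝ => T * (T / L - |γ| / (2 * L ^ ((3 : ℝ) / 2)) * x)) atTop atTop := by
    refine tendsto_id.atTop_mul_atTop₀ ?_
    exact tendsto_atTop_add_const_right _ _ (tendsto_id.atTop_div_const hL)
  refine (h2.comp ht).congr fun m => ?_
  have hlog : 0 ≤ log ((m : ℝ) + 1) := log_nonneg (by linarith [(Nat.cast_nonneg m : (0 : ℝ) ≤ m)])
  have := Real.mul_self_sqrt hlog
  simp only [Function.comp, Kf]
  rw [mul_sub, mul_div_assoc', this]; ring

theorem large_k (L γ x : ℝ) (hL : 0 < L) (C : ℝ) (k0 : ℝ) :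
    ∀ᶠ m : ℕ in atTop, ∀ k : ℕ, |(k : ℝ) - Kf L γ x (log ((m : ℝ) + 1))| ≤ C → k0 ≤ k := by
  filter_upwards [(Kf_tendsto L γ x hL).eventually_ge_atTop (C + k0)] with m hm k hk
  have := (abs_le.1 hk).1
  linarith

theorem loc_y (L γ x : ℝ) (hL : 0 < L) (hγ : γ ≠ 0) : ∃ R > 0, ∀ C : ℝ, 0 < C →
    ∀ᶠ m : ℕ in atTop, ∀ k : ℕ, |(k : ℝ) - Kf L γ x (log ((m : ℝ) + 1))| ≤ C →
      |√k * ((log ((m : ℝ) + 1) - k * L) / (|γ| / 2 * √k) - x) +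
        ((k : ℝ) - Kf L γ x (log ((m : ℝ) + 1))) * L / (|γ| / 2)| ≤ R := by
  set β := |γ| / 2 with hβ
  have hβp : 0 < β := by have := abs_pos.2 hγ; positivity
  set ℓ := √L with hℓ
  have hℓp : 0 < ℓ := by positivity
  have hL2 : L = ℓ * ℓ := (Real.mul_self_sqrt hL.le).symm
  have hL3 : L ^ ((3 : ℝ) / 2) = ℓ ^ 3 := by
    rw [hℓ, Real.sqrt_eq_rpow, ← Real.rpow_natCast, ← Real.rpow_mul hL.le]; norm_num
  refine ⟨|x| * (|β * x / L| + 1) + 1, by positivity, fun C hC => ?_⟩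
  have ht : Tendsto (fun m : ℕ => √(log ((m : ℝ) + 1))) atTop atTop := by
    refine Real.tendsto_sqrt_atTop.comp (Real.tendsto_log_atTop.comp ?_)
    exact tendsto_atTop_add_const_right _ _ tendsto_natCast_atTop_atTop
  filter_upwards [large_k L γ x hL C 1, ht.eventually_ge_atTop (C * ℓ)] with m hm hT k hk
  have hk1 := hm k hk
  have hlog : 0 ≤ log ((m : ℝ) + 1) := log_nonneg (by linarith [(Nat.cast_nonneg m : (0 : ℝ) ≤ m)])
  set t := log ((m : ℝ) + 1) with htd
  set T := √t with hTd
  have ht2 : t = T * T := (Real.mul_self_sqrt hlog).symm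
  set Q := √(k : ℝ) with hQ
  have hQp : 0 < Q := by rw [hQ]; exact Real.sqrt_pos.2 (by linarith)
  have hQ2 : (k : ℝ) = Q * Q := (Real.mul_self_sqrt (by linarith)).symm
  set P := T / ℓ with hP
  have hPC : C ≤ P := by rw [hP, le_div_iff₀ hℓp]; exact hT
  have hPp : 0 < P := by linarith
  have hK : Kf L γ x t = P * P - β * x / L * P := by
    rw [Kf, hL3, ← hTd, hP, ht2, hL2, hβ]; field_simp
  set θ := (k : ℝ) - Kf L γ x t with hθ
  have hPQ : P * P - Q * Q = β * x / L * P - θ := by rw [hθ, hK, ← hQ2]; ring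
  have e1 : Q * ((t - k * L) / (β * Q) - x) + θ * L / β = x * (P - Q) := by
    have e2 : t - k * L = L * (P * P - Q * Q) := by
      rw [hQ2, ht2, hP, hL2]; field_simp
    rw [e2, hPQ]; field_simp; ring
  rw [e1, abs_mul]
  have e3 : |P - Q| * P ≤ (|β * x / L| + 1) * P := by
    calc |P - Q| * P ≤ |P - Q| * (P + Q) := by gcongr; linarith
      _ = |P * P - Q * Q| := by
        rw [← abs_of_pos (by linarith : 0 < P + Q), ← abs_mul]
        congr 1; ring
      _ ≤ |β * x / L * P| + |θ| := by rw [hPQ]; exact abs_sub _ _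
      _ ≤ |β * x / L| * P + P := by
        rw [abs_mul, abs_of_pos hPp]; linarith
      _ = _ := by ring
  have e4 := le_of_mul_le_mul_right e3 hPp
  have := mul_le_mul_of_nonneg_left e4 (abs_nonneg x)
  linarith

set_option maxHeartbeats 2000000 in
theorem key_analytic (L γ x α : ℝ) (hL : 0 < L) (hp : -L + γ / 2 < 0) (hq : -L - γ / 2 < 0)
    (hα : 0 < α) (hα1 : α < 1) (hx : Phi x = α) :
    ∃ C > 0, ∃ c > 0, ∀ᶠ m : ℕ in atTop, ∀ k : ℕ,
      |(k : ℝ) - Kf L γ x (log ((m : ℝ) + 1))| ≤ C + 3 →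
      c / ((k : ℝ) + 1) ≤ aLev L γ m k - aLev L γ m (k + 1) ∧
      ((k : ℝ) ≤ Kf L γ x (log ((m : ℝ) + 1)) - C → α ≤ aLev L γ m k) ∧
      (Kf L γ x (log ((m : ℝ) + 1)) + C ≤ k → aLev L γ m k < α) := by
  by_cases hγ : γ = 0
  · subst hγ
    obtain ⟨C, hC, hC4⟩ : ∃ C > 0, 4 * exp (-(C * L)) < min α (1 - α) := by
      have h1 : Tendsto (fun C : ℝ => 4 * exp (-(C * L))) atTop (nhds (4 * 0)) := by
        refine Tendsto.const_mul _ (tendsto_exp_neg_atTop_nhds_zero.comp ?_)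
        exact tendsto_id.atTop_mul_const hL
      rw [mul_zero] at h1
      have h2 : 0 < min α (1 - α) := lt_min hα (by linarith)
      obtain ⟨C, h⟩ := ((h1.eventually_lt_const h2).and (eventually_gt_atTop 0)).exists
      exact ⟨C, h.2, h.1⟩
    set M := exp ((C + 3) * L) with hM
    have hM1 : 1 ≤ M := one_le_exp (by positivity)
    obtain ⟨c, hc, hd⟩ := drop_pos (exp_pos (-L + 0 / 2)) (exp_pos (-L - 0 / 2))
      (exp_lt_one_iff.2 hp) (exp_lt_one_iff.2 hq) hM1
    refine ⟨C, hC, c, hc, ?_⟩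
    filter_upwards [hd, eventually_ge_atTop 1] with m hm hm1 k hk
    set t := log ((m : ℝ) + 1) with ht
    have hmp : (0 : ℝ) < (m : ℝ) + 1 := by positivity
    have hK : Kf L 0 x t = t / L := by simp [Kf]
    rw [hK] at hk ⊢
    set u := t - k * L with hu
    have hul : u = (t / L - k) * L := by rw [hu]; field_simp
    have ha : aLev L 0 m k = filP m (exp u / ((m : ℝ) + 1)) := by
      rw [aLev_abs, ← ht, ← hu]; simp [radE_const]
    have hb := filP_log_bound m hm1 u
    rw [← ha] at hb
    refine ⟨?_, fun h => ?_, fun h => ?_⟩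
    · rw [aLev_step]
      have hxu : ∀ s : ℝ, ((m : ℝ) + 1) * exp (-(k * L) + 0 / 2 * s) = exp u := by
        intro s
        nth_rewrite 1 [← exp_log hmp]
        rw [← exp_add, hu, ht]; congr 1; ring
      have h1 := (abs_le.1 hk).1
      have h2 := (abs_le.1 hk).2
      calc c / ((k : ℝ) + 1) ≤ c := div_le_self hc.le (by linarith [(Nat.cast_nonneg k : (0 : ℝ) ≤ k)])
        _ = radE k (fun _ => c) := (radE_const k c).symm
        _ ≤ _ := by
          apply radE_mono
          intro s
          refine hm _ ?_ ?_
          · rw [hxu, hM, one_div, ← exp_neg, exp_le_exp, hul]; nlinarith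
          · rw [hxu, hM, exp_le_exp, hul]; nlinarith
    · have h1 : C * L ≤ u := by rw [hul]; nlinarith
      have hu0 : 0 ≤ u := le_trans (by positivity) h1
      rw [if_pos hu0, abs_of_nonneg hu0] at hb
      have h2 : exp (-u) ≤ exp (-(C * L)) := exp_le_exp.2 (by linarith)
      have := (abs_le.1 hb).1
      have := min_le_right α (1 - α)
      linarith
    · have h1 : u ≤ -(C * L) := by rw [hul]; nlinarith
      have hu0 : u < 0 := by nlinarith
      rw [if_neg (by linarith), abs_of_neg hu0] at hb
      have h2 : exp (- -u) ≤ exp (-(C * L)) := exp_le_exp.2 (by linarith)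
      have := (abs_le.1 hb).2
      have := min_le_left α (1 - α)
      linarith
  · obtain ⟨R, hR, hlocB⟩ := loc_y L γ x hL hγ
    set β := |γ| / 2 with hβ
    have hβp : 0 < β := by have := abs_pos.2 hγ; positivity
    set φ := (√(2 * Real.pi))⁻¹ * exp (-((|x| + 1) ^ 2 / 2)) with hφ
    have hφp : 0 < φ := by positivity
    set C0 := 50 + 2 * 4 / β with hC0
    have hC0p : 0 < C0 := by positivity
    set C := ((C0 + 1) / φ + R) * β / L with hC
    have hCp : 0 < C := by positivity
    have hCe : C * L / β - R = (C0 + 1) / φ := by rw [hC]; field_simp; ring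
    obtain ⟨c, hc, k0, hstepB⟩ := aLev_step_lower hγ hp hq (|x| + 1)
    refine ⟨C, hCp, c, hc, ?_⟩
    set Z := R + (C + 3) * L / β with hZ
    filter_upwards [hstepB, hlocB (C + 3) (by linarith), large_k L γ x hL (C + 3) (k0 + 1),
      large_k L γ x hL (C + 3) (Z ^ 2), eventually_ge_atTop 1] with m hstepA hlocA hk0A hkZA hm1 k hk
    have hloc := hlocA k hk
    have hk0 := hk0A k hk
    have hkZ := hkZA k hk
    clear hlocA hk0A hkZA
    obtain ⟨j, rfl⟩ : ∃ j, k = j + 1 := by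
      refine ⟨k - 1, ?_⟩
      have : k0 + 1 ≤ k := by exact_mod_cast hk0
      omega
    have hjk : k0 ≤ j := by
      push_cast at hk0
      have : (k0 : ℝ) ≤ j := by linarith
      exact_mod_cast this
    have hstep := hstepA j hjk
    have happ := aLev_approx (L := L) hγ m hm1 j
    push_cast at hloc hkZ hk ⊢
    rw [← hβ, ← hC0] at happ
    set K := Kf L γ x (log ((m : ℝ) + 1)) with hK
    set r := √((j : ℝ) + 1) with hr
    have hrp : 0 < r := by positivity
    have hr2 : r * r = (j : ℝ) + 1 := Real.mul_self_sqrt (by positivity)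
    set y := (log ((m : ℝ) + 1) - ((j : ℝ) + 1) * L) / (β * r) with hy
    have hZr : Z ≤ r := Real.le_sqrt_of_sq_le hkZ
    set θ := (j : ℝ) + 1 - K with hθ
    have hθL : |θ * L / β| ≤ (C + 3) * L / β := by
      rw [abs_div, abs_mul, abs_of_pos hL, abs_of_pos hβp]; gcongr
    have hyx : |y - x| ≤ 1 := by
      have : r * |y - x| ≤ r * 1 := by
        rw [mul_one]
        calc r * |y - x| = |r * (y - x)| := by rw [abs_mul, abs_of_pos hrp]
          _ = |(r * (y - x) + θ * L / β) - θ * L / β| := by ring_nf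
          _ ≤ R + (C + 3) * L / β := (abs_sub _ _).trans (add_le_add hloc hθL)
          _ ≤ r := hZr
      exact le_of_mul_le_mul_left this hrp
    have hyx' := abs_le.1 hyx
    have hyY : |y| ≤ |x| + 1 := by
      have : y = x + (y - x) := by ring
      rw [this]; exact (abs_add_le _ _).trans (by linarith)
    have hyY' := abs_le.1 hyY
    have hxx := abs_le.1 (le_refl |x|)
    have happ' := abs_le.1 happ
    have hC01 : φ * ((C0 + 1) / φ / r) = C0 / r + 1 / r := by field_simp
    have h1r : 0 < 1 / r := by positivity
    refine ⟨?_, fun h => ?_, fun h => ?_⟩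
    · refine le_trans ?_ (hstep hyY)
      rw [div_le_div_iff₀ (by positivity) hrp]
      have : 1 ≤ r := by rw [hr, Real.one_le_sqrt]; linarith [(Nat.cast_nonneg j : (0 : ℝ) ≤ j)]
      have : r ≤ (j : ℝ) + 1 + 1 := by nlinarith
      nlinarith
    · have h1 : (C0 + 1) / φ ≤ r * (y - x) := by
        have h2 := (abs_le.1 hloc).1
        have h3 : θ * L / β ≤ -(C * L / β) := by
          rw [← neg_div, ← neg_mul]; gcongr; linarith
        linarith
      have h2 : (C0 + 1) / φ / r ≤ y - x := by rw [div_le_iff₀ hrp]; linarith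
      have hpos : 0 < (C0 + 1) / φ / r := by positivity
      have h3 := Phi_lower (Y := |x| + 1) (a := x) (b := y) (by linarith) (by linarith) (by linarith)
      rw [← hφ] at h3
      have h4 := mul_le_mul_of_nonneg_left h2 hφp.le
      rw [hx] at h3
      linarith
    · have h1 : r * (y - x) ≤ -((C0 + 1) / φ) := by
        have h2 := (abs_le.1 hloc).2
        have h3 : C * L / β ≤ θ * L / β := by
          gcongr; linarith
        linarith
      have h2 : (C0 + 1) / φ / r ≤ x - y := by rw [div_le_iff₀ hrp]; linarith
      have hpos : 0 < (C0 + 1) / φ / r := by positivity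
      have h3 := Phi_lower (Y := |x| + 1) (a := y) (b := x) (by linarith) (by linarith) (by linarith)
      rw [← hφ] at h3
      have h4 := mul_le_mul_of_nonneg_left h2 hφp.le
      rw [hx] at h3
      linarith

section finiteModel
variable {V : Type} [Fintype V] [DecidableEq V]

/-- number of occurrences of `r` among the coordinates of `w` -/
def occ {n : ℕ} (w : Fin n → V) (r : V) : ℕ := ∑ i, if w i = r then 1 else 0

/-- product expectation -/
noncomputable def prodE (wt : V → ℝ) (n : ℕ) (G : (Fin n → V) → ℝ) : ℝ :=
  ∑ w : Fin n → V, (∏ i, wt (w i)) * G w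

theorem prodE_succ (wt : V → ℝ) (n : ℕ) (G : (Fin (n + 1) → V) → ℝ) :
    prodE wt (n + 1) G = ∑ v, wt v * prodE wt n (fun w => G (Fin.cons v w)) := by
  unfold prodE
  rw [← (Fin.consEquiv (fun _ : Fin (n + 1) => V)).sum_comp, Fintype.sum_prod_type]
  refine Finset.sum_congr rfl fun v _ => ?_
  rw [Finset.mul_sum]
  refine Finset.sum_congr rfl fun w _ => ?_
  simp [Fin.consEquiv, Fin.prod_univ_succ, mul_assoc]

theorem occ_cons {n : ℕ} (v : V) (w : Fin n → V) (r : V) :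
    occ (Fin.cons v w : Fin (n + 1) → V) r = (if v = r then 1 else 0) + occ w r := by
  unfold occ
  rw [Fin.sum_univ_succ]
  simp only [Fin.cons_zero, Fin.cons_succ]

theorem prodE_const (wt : V → ℝ) (h1 : ∑ v, wt v = 1) (n : ℕ) (c : ℝ) :
    prodE wt n (fun _ => c) = c := by
  induction n with
  | zero => simp [prodE]
  | succ n ih => rw [prodE_succ]; simp only [ih]; rw [← Finset.sum_mul, h1, one_mul]

theorem prodE_mono (wt : V → ℝ) (h0 : ∀ v, 0 ≤ wt v) (n : ℕ) {F G : (Fin n → V) → ℝ}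
    (h : ∀ w, F w ≤ G w) : prodE wt n F ≤ prodE wt n G :=
  Finset.sum_le_sum fun w _ => mul_le_mul_of_nonneg_left (h w)
    (Finset.prod_nonneg fun i _ => h0 _)

theorem prodE_sum {ι : Type} (s : Finset ι) (wt : V → ℝ) (n : ℕ) (F : ι → (Fin n → V) → ℝ) :
    prodE wt n (fun w => ∑ i ∈ s, F i w) = ∑ i ∈ s, prodE wt n (F i) := by
  unfold prodE
  rw [Finset.sum_comm]
  simp only [Finset.mul_sum]

theorem prodE_smul (wt : V → ℝ) (n : ℕ) (c : ℝ) (F : (Fin n → V) → ℝ) :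
    prodE wt n (fun w => c * F w) = c * prodE wt n F := by
  unfold prodE
  rw [Finset.mul_sum]; refine Finset.sum_congr rfl fun w _ => by ring

theorem prodE_add (wt : V → ℝ) (n : ℕ) (F G : (Fin n → V) → ℝ) :
    prodE wt n (fun w => F w + G w) = prodE wt n F + prodE wt n G := by
  unfold prodE
  rw [← Finset.sum_add_distrib]; refine Finset.sum_congr rfl fun w _ => by ring

theorem split_one (wt : V → ℝ) (h1 : ∑ v, wt v = 1) (r : V) (f : ℕ → ℝ) :
    ∑ v, wt v * f (if v = r then 1 else 0) = wt r * f 1 + (1 - wt r) * f 0 := by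
  have : ∀ v, wt v * f (if v = r then 1 else 0) =
      wt v * f 0 + (if v = r then wt v * (f 1 - f 0) else 0) := by
    intro v; split_ifs <;> ring
  simp only [this]
  rw [Finset.sum_add_distrib, ← Finset.sum_mul, h1, Finset.sum_ite_eq' Finset.univ r]
  simp; ring

theorem split_two (wt : V → ℝ) (h1 : ∑ v, wt v = 1) {r s : V} (hrs : r ≠ s) (f : ℕ → ℕ → ℝ) :
    ∑ v, wt v * f (if v = r then 1 else 0) (if v = s then 1 else 0) =
      wt r * f 1 0 + wt s * f 0 1 + (1 - wt r - wt s) * f 0 0 := by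
  have : ∀ v, wt v * f (if v = r then 1 else 0) (if v = s then 1 else 0) =
      wt v * f 0 0 + (if v = r then wt v * (f 1 0 - f 0 0) else 0) +
        (if v = s then wt v * (f 0 1 - f 0 0) else 0) := by
    intro v
    by_cases h : v = r
    · subst h; simp [hrs]; ring
    · by_cases h' : v = s
      · subst h'; simp [h]; ring
      · simp [h, h']
  simp only [this]
  rw [Finset.sum_add_distrib, Finset.sum_add_distrib, ← Finset.sum_mul, h1,
    Finset.sum_ite_eq' Finset.univ r, Finset.sum_ite_eq' Finset.univ s]
  simp; ring

noncomputable def J1 (wt : V → ℝ) (n : ℕ) (r : V) (a : ℕ) : ℝ :=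
  prodE wt n (fun w => if a + occ w r ≤ 1 then 1 else 0)

noncomputable def J2 (wt : V → ℝ) (n : ℕ) (r s : V) (a b : ℕ) : ℝ :=
  prodE wt n (fun w => if a + occ w r ≤ 1 ∧ b + occ w s ≤ 1 then 1 else 0)

theorem J1_succ (wt : V → ℝ) (h1 : ∑ v, wt v = 1) (n : ℕ) (r : V) (a : ℕ) :
    J1 wt (n + 1) r a = wt r * J1 wt n r (a + 1) + (1 - wt r) * J1 wt n r a := by
  rw [J1, prodE_succ]
  have := split_one wt h1 r (fun b => J1 wt n r (a + b))
  simp only [add_zero] at this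
  rw [← this]
  simp only [J1, occ_cons, add_assoc]

theorem J2_succ (wt : V → ℝ) (h1 : ∑ v, wt v = 1) (n : ℕ) {r s : V} (hrs : r ≠ s) (a b : ℕ) :
    J2 wt (n + 1) r s a b = wt r * J2 wt n r s (a + 1) b + wt s * J2 wt n r s a (b + 1) +
      (1 - wt r - wt s) * J2 wt n r s a b := by
  rw [J2, prodE_succ]
  have := split_two wt h1 hrs (fun c d => J2 wt n r s (a + c) (b + d))
  simp only [add_zero] at this
  rw [← this]
  simp only [J2, occ_cons, add_assoc]

theorem J1_two (wt : V → ℝ) (n : ℕ) (r : V) : J1 wt n r 2 = 0 := by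
  have : ∀ w : Fin n → V, ¬ (2 + occ w r ≤ 1) := fun w => by omega
  simp [J1, this, prodE]

theorem J2_two_left (wt : V → ℝ) (n : ℕ) (r s : V) (b : ℕ) : J2 wt n r s 2 b = 0 := by
  have : ∀ w : Fin n → V, ¬ (2 + occ w r ≤ 1) := fun w => by omega
  simp [J2, this, prodE]

theorem J2_two_right (wt : V → ℝ) (n : ℕ) (r s : V) (a : ℕ) : J2 wt n r s a 2 = 0 := by
  have : ∀ w : Fin n → V, ¬ (2 + occ w s ≤ 1) := fun w => by omega
  simp [J2, this, prodE]

theorem J1_one (wt : V → ℝ) (h1 : ∑ v, wt v = 1) (r : V) (n : ℕ) :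
    J1 wt n r 1 = (1 - wt r) ^ n := by
  induction n with
  | zero => simp [J1, prodE, occ]
  | succ n ih => rw [J1_succ wt h1, J1_two, ih]; ring

theorem J1_zero (wt : V → ℝ) (h1 : ∑ v, wt v = 1) (r : V) (m : ℕ) :
    J1 wt (m + 1) r 0 = unf m (wt r) := by
  induction m with
  | zero =>
    rw [J1_succ wt h1, J1_one wt h1]
    simp [J1, prodE, occ, unf]
  | succ m ih => rw [J1_succ wt h1, ih, J1_one wt h1]; unfold unf; push_cast; ring

theorem J2_11 (wt : V → ℝ) (h1 : ∑ v, wt v = 1) {r s : V} (hrs : r ≠ s) (n : ℕ) :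
    J2 wt n r s 1 1 = (1 - wt r - wt s) ^ n := by
  induction n with
  | zero => simp [J2, prodE, occ]
  | succ n ih => rw [J2_succ wt h1 n hrs, J2_two_left, J2_two_right, ih]; ring

theorem J2_01 (wt : V → ℝ) (h1 : ∑ v, wt v = 1) {r s : V} (hrs : r ≠ s) (m : ℕ) :
    J2 wt (m + 1) r s 0 1 = (1 - wt r - wt s) ^ m * ((1 - wt r - wt s) + (m + 1) * wt r) := by
  induction m with
  | zero =>
    rw [J2_succ wt h1 _ hrs, J2_11 wt h1 hrs, J2_two_right]
    simp [J2, prodE, occ]; ring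
  | succ m ih =>
    rw [J2_succ wt h1 _ hrs, J2_11 wt h1 hrs, J2_two_right, ih]; push_cast; ring

theorem J2_10 (wt : V → ℝ) (h1 : ∑ v, wt v = 1) {r s : V} (hrs : r ≠ s) (m : ℕ) :
    J2 wt (m + 1) r s 1 0 = (1 - wt r - wt s) ^ m * ((1 - wt r - wt s) + (m + 1) * wt s) := by
  induction m with
  | zero =>
    rw [J2_succ wt h1 _ hrs, J2_11 wt h1 hrs, J2_two_left]
    simp [J2, prodE, occ]
  | succ m ih =>
    rw [J2_succ wt h1 _ hrs, J2_11 wt h1 hrs, J2_two_left, ih]; push_cast; ring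

theorem J2_00 (wt : V → ℝ) (h1 : ∑ v, wt v = 1) {r s : V} (hrs : r ≠ s) (m : ℕ) :
    J2 wt (m + 2) r s 0 0 = (1 - wt r - wt s) ^ m * ((1 - wt r - wt s) ^ 2 +
      (m + 2) * (wt r + wt s) * (1 - wt r - wt s) + (m + 2) * (m + 1) * (wt r * wt s)) := by
  induction m with
  | zero =>
    rw [J2_succ wt h1 _ hrs, J2_01 wt h1 hrs, J2_10 wt h1 hrs, J2_succ wt h1 _ hrs]
    simp [J2, prodE, occ]; ring
  | succ m ih =>
    rw [J2_succ wt h1 _ hrs, J2_01 wt h1 hrs, J2_10 wt h1 hrs, ih]; push_cast; ring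

theorem pow_bern {t w : ℝ} (ht : 0 ≤ t) (hw : 0 ≤ w) (m : ℕ) :
    t ^ m * (t + (m + 1) * w) ≤ (t + w) ^ (m + 1) := by
  induction m with
  | zero => simp
  | succ m ih =>
    calc t ^ (m + 1) * (t + ((m + 1 : ℕ) + 1) * w)
        ≤ (t ^ m * (t + (m + 1) * w)) * (t + w) := by
          have : 0 ≤ t ^ m * ((m + 1) * w * w) := by positivity
          have e : (t ^ m * (t + ((m : ℝ) + 1) * w)) * (t + w) =
              t ^ (m + 1) * (t + ((m : ℝ) + 1 + 1) * w) + t ^ m * (((m : ℝ) + 1) * w * w) := by ring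
          push_cast; linarith
      _ ≤ (t + w) ^ (m + 1) * (t + w) := by gcongr
      _ = _ := by ring

theorem neg_corr (m : ℕ) {x y : ℝ} (hx : 0 ≤ x) (hy : 0 ≤ y) (hxy : x + y ≤ 1) :
    (1 - x - y) ^ m * ((1 - x - y) ^ 2 + (m + 2) * (x + y) * (1 - x - y) +
      (m + 2) * (m + 1) * (x * y)) ≤ unf (m + 1) x * unf (m + 1) y := by
  have ht : 0 ≤ 1 - x - y := by linarith
  have hb := pow_bern ht (mul_nonneg hx hy) m
  have e1 : unf (m + 1) x * unf (m + 1) y =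
      (1 - x - y + x * y) ^ (m + 1) * ((1 + (m + 1) * x) * (1 + (m + 1) * y)) := by
    unfold unf
    rw [show 1 - x - y + x * y = (1 - x) * (1 - y) by ring, mul_pow]; push_cast; ring
  rw [e1]
  refine le_trans ?_ (mul_le_mul_of_nonneg_right hb (by positivity))
  rw [mul_assoc ((1 - x - y) ^ m) (1 - x - y + _)]
  refine mul_le_mul_of_nonneg_left ?_ (pow_nonneg ht m)
  have : 0 ≤ ((m : ℝ) + 1) ^ 3 * (x * y) ^ 2 := by positivity
  nlinarith

/-- number of unfilled letters -/
noncomputable def unfCount {n : ℕ} (w : Fin n → V) : ℝ := ∑ r, if occ w r ≤ 1 then (1 : ℝ) else 0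

theorem unf_variance (wt : V → ℝ) (h0 : ∀ v, 0 ≤ wt v) (h1 : ∑ v, wt v = 1) (m : ℕ) :
    prodE wt (m + 2) (fun w => (unfCount w - ∑ r, unf (m + 1) (wt r)) ^ 2) ≤ Fintype.card V := by
  set A := ∑ r, unf (m + 1) (wt r) with hA
  have hle1 : ∀ r, wt r ≤ 1 := fun r => by
    rw [← h1]; exact Finset.single_le_sum (fun v _ => h0 v) (Finset.mem_univ r)
  have hle2 : ∀ r s, r ≠ s → wt r + wt s ≤ 1 := fun r s hrs => by
    rw [← h1, ← Finset.sum_pair hrs]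
    exact Finset.sum_le_sum_of_subset_of_nonneg (Finset.subset_univ _) (fun v _ _ => h0 v)
  have e1 : prodE wt (m + 2) (fun w => unfCount w) = A := by
    unfold unfCount
    rw [prodE_sum, hA]
    refine Finset.sum_congr rfl fun r _ => ?_
    rw [← J1_zero wt h1 r (m + 1)]; simp [J1]
  have e2 : prodE wt (m + 2) (fun w => unfCount w * unfCount w) ≤ Fintype.card V + A * A := by
    have f1 : ∀ w : Fin (m + 2) → V, unfCount w * unfCount w =
        ∑ r, ∑ s, if 0 + occ w r ≤ 1 ∧ 0 + occ w s ≤ 1 then (1 : ℝ) else 0 := by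
      intro w
      unfold unfCount
      rw [Finset.sum_mul_sum]
      refine Finset.sum_congr rfl fun r _ => Finset.sum_congr rfl fun s _ => ?_
      simp only [zero_add]
      by_cases h : occ w r ≤ 1 <;> by_cases h' : occ w s ≤ 1 <;> simp [h, h']
    simp only [f1]
    rw [prodE_sum]
    simp only [prodE_sum]
    have f2 : ∀ r s, prodE wt (m + 2)
        (fun w => if 0 + occ w r ≤ 1 ∧ 0 + occ w s ≤ 1 then (1 : ℝ) else 0) ≤
        (if r = s then 1 else 0) + unf (m + 1) (wt r) * unf (m + 1) (wt s) := by
      intro r s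
      by_cases hrs : r = s
      · rw [if_pos hrs]
        have g1 : prodE wt (m + 2)
            (fun w => if 0 + occ w r ≤ 1 ∧ 0 + occ w s ≤ 1 then (1 : ℝ) else 0) ≤ 1 := by
          refine le_trans (prodE_mono wt h0 (m + 2) (G := fun _ => (1 : ℝ)) fun w => ?_)
            (prodE_const wt h1 (m + 2) 1).le
          split_ifs <;> norm_num
        have := unf_nonneg (m + 1) (h0 r) (hle1 r)
        have := unf_nonneg (m + 1) (h0 s) (hle1 s)
        nlinarith
      · rw [if_neg hrs, zero_add]
        have := J2_00 wt h1 hrs m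
        unfold J2 at this
        rw [this]
        exact neg_corr m (h0 r) (h0 s) (hle2 r s hrs)
    refine (Finset.sum_le_sum fun r _ => Finset.sum_le_sum fun s _ => f2 r s).trans ?_
    simp only [Finset.sum_add_distrib]
    rw [← Finset.sum_mul_sum]
    simp [hA]
  have e3 : (fun w : Fin (m + 2) → V => (unfCount w - A) ^ 2) =
      fun w => unfCount w * unfCount w + ((-2 * A) * unfCount w + A * A) := by
    funext w; ring
  rw [e3, prodE_add, prodE_add, prodE_smul, e1, prodE_const wt h1]
  nlinarith

theorem unf_cheb (wt : V → ℝ) (h0 : ∀ v, 0 ≤ wt v) (h1 : ∑ v, wt v = 1) (m : ℕ) {d : ℝ}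
    (hd : 0 < d) :
    prodE wt (m + 2) (fun w => if d ≤ |unfCount w - ∑ r, unf (m + 1) (wt r)| then 1 else 0) ≤
      Fintype.card V / d ^ 2 := by
  rw [le_div_iff₀ (by positivity), mul_comm, ← prodE_smul]
  refine le_trans (prodE_mono wt h0 _ fun w => ?_) (unf_variance wt h0 h1 m)
  split_ifs with h
  · rw [mul_one, ← sq_abs (unfCount w - _)]
    gcongr
  · rw [mul_zero]; positivity

end finiteModel

/-- weight of a word -/
noncomputable def wp (p : ℝ) {k : ℕ} (v : Fin k → Bool) : ℝ := ∏ j, if v j then p else 1 - p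

theorem wp_sum_cons (k : ℕ) (F : (Fin (k + 1) → Bool) → ℝ) :
    ∑ v, F v = ∑ v : Fin k → Bool, (F (Fin.cons true v) + F (Fin.cons false v)) := by
  rw [← (Fin.consEquiv (fun _ : Fin (k + 1) => Bool)).sum_comp, Fintype.sum_prod_type,
    Fintype.sum_bool, ← Finset.sum_add_distrib]
  rfl

theorem wp_cons (p : ℝ) {k : ℕ} (b : Bool) (v : Fin k → Bool) :
    wp p (Fin.cons b v : Fin (k + 1) → Bool) = (if b then p else 1 - p) * wp p v := by
  unfold wp
  rw [Fin.prod_univ_succ]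
  simp only [Fin.cons_zero, Fin.cons_succ]

theorem wp_nonneg {p : ℝ} (h0 : 0 ≤ p) (h1 : p ≤ 1) {k : ℕ} (v : Fin k → Bool) : 0 ≤ wp p v := by
  unfold wp
  refine Finset.prod_nonneg fun j _ => ?_
  split_ifs <;> linarith

theorem wp_sum (p : ℝ) (k : ℕ) : ∑ v : Fin k → Bool, wp p v = 1 := by
  induction k with
  | zero => simp [wp]
  | succ k ih =>
    rw [wp_sum_cons]
    simp only [wp_cons, if_true]
    refine Eq.trans (Finset.sum_congr rfl fun v _ => ?_) ih
    simp; ring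

theorem wp_le_one {p : ℝ} (h0 : 0 ≤ p) (h1 : p ≤ 1) {k : ℕ} (v : Fin k → Bool) : wp p v ≤ 1 := by
  rw [← wp_sum p k]
  exact Finset.single_le_sum (fun v _ => wp_nonneg h0 h1 v) (Finset.mem_univ v)

theorem wp_radE (p L γ : ℝ) (hp : p = exp (-L + γ / 2)) (hq : 1 - p = exp (-L - γ / 2)) (k : ℕ) :
    ∀ G : ℝ → ℝ, ∑ v : Fin k → Bool, G (wp p v) =
      2 ^ k * radE k (fun s => G (exp (-(k * L) + γ / 2 * s))) := by
  induction k with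
  | zero => intro G; simp [wp, radE]
  | succ k ih =>
    intro G
    rw [wp_sum_cons]
    simp only [wp_cons, if_true, Bool.false_eq_true, if_false]
    rw [ih (fun x => G (p * x) + G ((1 - p) * x))]
    simp only [radE]
    rw [pow_succ, mul_assoc, ← radE_smul k 2]
    congr 2
    funext s
    rw [hq, hp, ← exp_add, ← exp_add]
    push_cast
    rw [show -L + γ / 2 + (-(k * L) + γ / 2 * s) = -((k + 1) * L) + γ / 2 * (s + 1) by ring,
      show -L - γ / 2 + (-(k * L) + γ / 2 * s) = -((k + 1) * L) + γ / 2 * (s - 1) by ring]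
    ring

theorem aLev_eq (p L γ : ℝ) (h0 : 0 ≤ p) (h1 : p ≤ 1)
    (hp : p = exp (-L + γ / 2)) (hq : 1 - p = exp (-L - γ / 2)) (m k : ℕ) :
    ∑ v : Fin k → Bool, unf m (wp p v) = 2 ^ k * (1 - aLev L γ m k) := by
  have := wp_radE p L γ hp hq k (filP m)
  unfold aLev
  rw [mul_sub, ← this]
  have e : ∀ v : Fin k → Bool, filP m (wp p v) = 1 - unf m (wp p v) := fun v => by
    unfold filP; rw [min_eq_left (wp_le_one h0 h1 v)]
  simp only [e]
  rw [Finset.sum_sub_distrib]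
  simp

/-- restriction to the first bits -/
def resB (n k : ℕ) (ω : ℕ → ℕ → Bool) : Fin n → Fin k → Bool := fun i j => ω i j

theorem cyl_prob {p : ℝ} (h0 : 0 ≤ p) (h1 : p ≤ 1) {ν : Measure (ℕ → ℕ → Bool)} (hν : IIDBits p ν)
    (n k : ℕ) (w : Fin n → Fin k → Bool) :
    ν {ω | resB n k ω = w} = ENNReal.ofReal (∏ i, wp p (w i)) := by
  set b : ℕ × ℕ → Bool := fun s => if h : s.1 < n ∧ s.2 < k then w ⟨s.1, h.1⟩ ⟨s.2, h.2⟩ else false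
    with hb
  have key := hν.2 (Finset.range n ×ˢ Finset.range k) b
  have e1 : {ω : ℕ → ℕ → Bool | resB n k ω = w} =
      {ω | ∀ s ∈ Finset.range n ×ˢ Finset.range k, ω s.1 s.2 = b s} := by
    ext ω
    simp only [Set.mem_setOf_eq, Finset.mem_product, Finset.mem_range]
    constructor
    · rintro h s hs
      rw [hb]; simp only [hs, and_self, dif_pos]
      rw [← h]; rfl
    · intro h
      funext i j
      have := h (i, j) ⟨i.2, j.2⟩
      simpa [hb, resB] using this
  have h2 : ∀ c : Bool, (0 : ℝ) ≤ if c then p else 1 - p := fun c => by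
    split_ifs <;> linarith
  rw [e1, key, ← ENNReal.ofReal_prod_of_nonneg (fun s _ => h2 _)]
  congr 1
  rw [Finset.prod_product, Finset.prod_range]
  refine Finset.prod_congr rfl fun i _ => ?_
  rw [Finset.prod_range]
  unfold wp
  refine Finset.prod_congr rfl fun j _ => ?_
  simp [hb]

open Classical in
theorem event_prob {p : ℝ} (h0 : 0 ≤ p) (h1 : p ≤ 1) {ν : Measure (ℕ → ℕ → Bool)}
    (hν : IIDBits p ν) (n k : ℕ) (Q : (Fin n → Fin k → Bool) → Prop) :
    ν {ω | Q (resB n k ω)} ≤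
      ENNReal.ofReal (prodE (wp p) n (fun w => if Q w then 1 else 0)) := by
  have e1 : {ω | Q (resB n k ω)} ⊆
      ⋃ w ∈ Finset.univ.filter Q, {ω | resB n k ω = w} := by
    intro ω hω
    simp only [Set.mem_iUnion]
    exact ⟨resB n k ω, by simpa using hω, rfl⟩
  refine (measure_mono e1).trans ((measure_biUnion_finset_le _ _).trans ?_)
  simp only [cyl_prob h0 h1 hν]
  rw [← ENNReal.ofReal_sum_of_nonneg
    (fun w _ => Finset.prod_nonneg fun i _ => wp_nonneg h0 h1 _)]
  refine le_of_eq ?_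
  congr 1
  unfold prodE
  rw [Finset.sum_filter]
  refine Finset.sum_congr rfl fun w _ => ?_
  by_cases h : Q w <;> simp [h]

theorem prefCount_eq (ω : ℕ → ℕ → Bool) (n k : ℕ) (r : Fin k → Bool) :
    prefCount ω n k r = occ (resB n k ω) r := by
  unfold prefCount occ
  rw [Finset.card_filter, Finset.sum_range]
  refine Finset.sum_congr rfl fun i _ => ?_
  simp only [resB, funext_iff]

theorem fracFilled_eq (ω : ℕ → ℕ → Bool) (n k : ℕ) :
    2 ^ k * fracFilled ω n k = 2 ^ k - unfCount (resB n k ω) := by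
  unfold fracFilled fillCount unfCount
  rw [mul_div_cancel₀ _ (by positivity), Finset.card_filter]
  push_cast
  rw [eq_sub_iff_add_eq, ← Finset.sum_add_distrib]
  have : ∀ r : Fin k → Bool, ((if 2 ≤ prefCount ω n k r then (1 : ℝ) else 0) +
      if occ (resB n k ω) r ≤ 1 then (1 : ℝ) else 0) = 1 := by
    intro r
    rw [prefCount_eq]
    by_cases h : occ (resB n k ω) r ≤ 1
    · rw [if_neg (by omega), if_pos h]; norm_num
    · rw [if_pos (by omega), if_neg h]; norm_num
  simp only [this]
  simp

theorem frac_cheb {p L γ : ℝ} (h0 : 0 ≤ p) (h1 : p ≤ 1)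
    (hp : p = exp (-L + γ / 2)) (hq : 1 - p = exp (-L - γ / 2)) {ν : Measure (ℕ → ℕ → Bool)}
    (hν : IIDBits p ν) (m k : ℕ) {δ : ℝ} (hδ : 0 < δ) :
    ν {ω | δ ≤ |fracFilled ω (m + 2) k - aLev L γ (m + 1) k|} ≤
      ENNReal.ofReal (1 / (2 ^ k * δ ^ 2)) := by
  have e1 : {ω | δ ≤ |fracFilled ω (m + 2) k - aLev L γ (m + 1) k|} ⊆
      {ω | 2 ^ k * δ ≤ |unfCount (resB (m + 2) k ω) -
        ∑ v : Fin k → Bool, unf (m + 1) (wp p v)|} := by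
    intro ω hω
    simp only [Set.mem_setOf_eq] at hω ⊢
    rw [aLev_eq p L γ h0 h1 hp hq]
    have := fracFilled_eq ω (m + 2) k
    have e : unfCount (resB (m + 2) k ω) - 2 ^ k * (1 - aLev L γ (m + 1) k) =
        2 ^ k * (-(fracFilled ω (m + 2) k - aLev L γ (m + 1) k)) := by linarith
    rw [e, abs_mul, abs_neg, abs_of_pos (by positivity : (0 : ℝ) < 2 ^ k)]
    gcongr
  refine (measure_mono e1).trans ((event_prob h0 h1 hν (m + 2) k
    (fun w => 2 ^ k * δ ≤ |unfCount w - ∑ v : Fin k → Bool, unf (m + 1) (wp p v)|)).trans ?_)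
  refine ENNReal.ofReal_le_ofReal ?_
  have := unf_cheb (wp p (k := k)) (fun v => wp_nonneg h0 h1 v) (wp_sum p k) m
    (by positivity : (0 : ℝ) < 2 ^ k * δ)
  refine le_trans (le_of_eq ?_) (this.trans (le_of_eq ?_))
  · congr 1
  · simp only [Fintype.card_pi, Fintype.card_bool, Finset.prod_const, Finset.card_univ,
      Fintype.card_fin]
    push_cast
    field_simp

theorem fillCount_succ (ω : ℕ → ℕ → Bool) (n k : ℕ) :
    fillCount ω n (k + 1) ≤ 2 * fillCount ω n k := by
  have hsub : (Finset.univ.filter fun r : Fin (k + 1) → Bool => 2 ≤ prefCount ω n (k + 1) r) ⊆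
      ((Finset.univ.filter fun r : Fin k → Bool => 2 ≤ prefCount ω n k r) ×ˢ
        (Finset.univ : Finset Bool)).image
          (fun x => (Fin.snoc x.1 x.2 : Fin (k + 1) → Bool)) := by
    intro r hr
    rw [Finset.mem_filter] at hr
    rw [Finset.mem_image]
    refine ⟨(Fin.init r, r (Fin.last k)), ?_, Fin.snoc_init_self r⟩
    rw [Finset.mem_product]
    refine ⟨?_, Finset.mem_univ _⟩
    rw [Finset.mem_filter]
    refine ⟨Finset.mem_univ _, hr.2.trans ?_⟩
    unfold prefCount
    refine Finset.card_le_card fun i hi => ?_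
    rw [Finset.mem_filter] at hi ⊢
    refine ⟨hi.1, fun j => ?_⟩
    have := hi.2 j.castSucc
    simpa [Fin.init] using this
  unfold fillCount
  refine (Finset.card_le_card hsub).trans (Finset.card_image_le.trans ?_)
  rw [Finset.card_product]
  simp [mul_comm]

theorem fracFilled_anti (ω : ℕ → ℕ → Bool) (n : ℕ) : Antitone (fracFilled ω n) := by
  refine antitone_nat_of_succ_le fun k => ?_
  unfold fracFilled
  have : (fillCount ω n (k + 1) : ℝ) ≤ 2 * fillCount ω n k := by exact_mod_cast fillCount_succ ω n k
  rw [div_le_div_iff₀ (by positivity) (by positivity), pow_succ]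
  have h2 : (0 : ℝ) < 2 ^ k := by positivity
  nlinarith

theorem fracFilled_zero (ω : ℕ → ℕ → Bool) (n : ℕ) (hn : 2 ≤ n) : fracFilled ω n 0 = 1 := by
  have : ∀ r : Fin 0 → Bool, prefCount ω n 0 r = n := fun r => by
    simp [prefCount]
  simp [fracFilled, fillCount, this, hn]

theorem fillCount_le (ω : ℕ → ℕ → Bool) (n k : ℕ) : fillCount ω n k ≤ n := by
  have hsub : (Finset.univ.filter fun r : Fin k → Bool => 2 ≤ prefCount ω n k r) ⊆
      (Finset.range n).image (fun i => fun j : Fin k => ω i j) := by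
    intro r hr
    rw [Finset.mem_filter] at hr
    have : 0 < prefCount ω n k r := by omega
    unfold prefCount at this
    obtain ⟨i, hi⟩ := Finset.card_pos.1 this
    rw [Finset.mem_filter] at hi
    rw [Finset.mem_image]
    exact ⟨i, hi.1, funext hi.2⟩
  unfold fillCount
  refine (Finset.card_le_card hsub).trans (Finset.card_image_le.trans ?_)
  simp

theorem fill_bdd {α : ℝ} (hα : 0 < α) (ω : ℕ → ℕ → Bool) (n : ℕ) :
    BddAbove {k | α ≤ fracFilled ω n k} := by
  refine ⟨⌈(n : ℝ) / α⌉₊, fun k hk => ?_⟩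
  simp only [Set.mem_setOf_eq] at hk
  unfold fracFilled at hk
  have h1 : (fillCount ω n k : ℝ) ≤ n := by exact_mod_cast fillCount_le ω n k
  rw [le_div_iff₀ (by positivity)] at hk
  have h2 : (k : ℝ) ≤ 2 ^ k := by exact_mod_cast (Nat.lt_two_pow_self (n := k)).le
  have h3 : (k : ℝ) ≤ n / α := by
    rw [le_div_iff₀ hα]; nlinarith
  exact_mod_cast h3.trans (Nat.le_ceil _)

theorem level_of {α : ℝ} (hα : 0 < α) (hα1 : α ≤ 1) (ω : ℕ → ℕ → Bool) (n : ℕ) (hn : 2 ≤ n) (k : ℕ)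
    (h1 : α ≤ fracFilled ω n k) (h2 : fracFilled ω n (k + 2) < α) :
    fillupLevel α ω n = k ∨ fillupLevel α ω n = k + 1 := by
  have a1 : k ≤ fillupLevel α ω n := le_csSup (fill_bdd hα ω n) h1
  have a2 : α ≤ fracFilled ω n (fillupLevel α ω n) :=
    Nat.sSup_mem (s := {k | α ≤ fracFilled ω n k}) ⟨k, h1⟩ (fill_bdd hα ω n)
  have a3 : fillupLevel α ω n < k + 2 := by
    by_contra h
    push Not at h
    have := fracFilled_anti ω n h
    linarith
  omega

theorem disc_ivt (a : ℕ → ℝ) (α : ℝ) (i : ℕ) (d : ℕ) (hi : α ≤ a i) (hj : a (i + d) < α) :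
    ∃ M, i ≤ M ∧ M < i + d ∧ α ≤ a M ∧ a (M + 1) < α := by
  induction d with
  | zero => simp at hj; linarith
  | succ d ih =>
    by_cases h : a (i + d) < α
    · obtain ⟨M, h1, h2, h3, h4⟩ := ih h
      exact ⟨M, h1, by omega, h3, h4⟩
    · exact ⟨i + d, by omega, by omega, not_lt.1 h, hj⟩

theorem choose_level (L γ x α : ℝ) (hL : 0 < L) (hp : -L + γ / 2 < 0) (hq : -L - γ / 2 < 0)
    (hα : 0 < α) (hα1 : α < 1) (hx : Phi x = α) :
    ∃ C > 0, ∃ c > 0, ∀ᶠ m : ℕ in atTop, ∃ k : ℕ,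
      |(k : ℝ) - Kf L γ x (log ((m : ℝ) + 1))| ≤ C ∧
      α + c / ((k : ℝ) + 3) ≤ aLev L γ m k ∧ aLev L γ m (k + 2) ≤ α - c / ((k : ℝ) + 3) := by
  obtain ⟨C, hC, c, hc, hev⟩ := key_analytic L γ x α hL hp hq hα hα1 hx
  refine ⟨C + 3, by linarith, c / 2, by linarith, ?_⟩
  filter_upwards [hev, (Kf_tendsto L γ x hL).eventually_ge_atTop (C + 5)] with m hm hK
  set K := Kf L γ x (log ((m : ℝ) + 1)) with hKdef
  have i1 : ((⌊K - C⌋₊ : ℕ) : ℝ) ≤ K - C := Nat.floor_le (by linarith)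
  have i2 : K - C < (⌊K - C⌋₊ : ℕ) + 1 := Nat.lt_floor_add_one _
  have j1 : K + C ≤ (⌈K + C⌉₊ : ℕ) := Nat.le_ceil _
  have j2 : ((⌈K + C⌉₊ : ℕ) : ℝ) < K + C + 1 := Nat.ceil_lt_add_one (by linarith)
  set i := ⌊K - C⌋₊
  set j := ⌈K + C⌉₊
  have hij : i ≤ j := by
    have : (i : ℝ) ≤ j := by linarith
    exact_mod_cast this
  obtain ⟨d, hd⟩ := Nat.exists_eq_add_of_le hij
  have ai := (hm i (abs_le.2 ⟨by linarith, by linarith⟩)).2.1 i1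
  have aj := (hm j (abs_le.2 ⟨by linarith, by linarith⟩)).2.2 j1
  rw [hd] at aj
  obtain ⟨M, h1, h2, h3, h4⟩ := disc_ivt (aLev L γ m) α i d ai aj
  have h1' : (i : ℝ) ≤ M := by exact_mod_cast h1
  have h2' : (M : ℝ) + 1 ≤ j := by rw [hd]; exact_mod_cast h2
  have hM0 : 1 ≤ M := by
    have : (0 : ℝ) < M := by linarith
    exact_mod_cast this
  obtain ⟨N, rfl⟩ : ∃ N, M = N + 1 := ⟨M - 1, by omega⟩
  push_cast at h1' h2'
  have s0 := (hm N (abs_le.2 ⟨by linarith, by linarith⟩)).1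
  have s1 := (hm (N + 1) (abs_le.2 ⟨by push_cast; linarith, by push_cast; linarith⟩)).1
  have s2 := (hm (N + 2) (abs_le.2 ⟨by push_cast; linarith, by push_cast; linarith⟩)).1
  push_cast at s1 s2
  have hN : (0 : ℝ) ≤ N := by positivity
  have r1 : c / 2 / ((N : ℝ) + 1 + 3) ≤ c / 2 / ((N : ℝ) + 1 + 1) := by
    exact div_le_div₀ (by linarith) (by linarith) (by linarith) (by linarith)
  have r2 : c / 2 / ((N : ℝ) + 1 + 3) ≤ c / ((N : ℝ) + 2 + 1) := by
    exact div_le_div₀ (by linarith) (by linarith) (by linarith) (by linarith)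
  have r3 : c / 2 / ((N : ℝ) + 3) ≤ c / ((N : ℝ) + 1) := by
    exact div_le_div₀ (by linarith) (by linarith) (by linarith) (by linarith)
  have r4 : c / 2 / ((N : ℝ) + 3) ≤ c / 2 / ((N : ℝ) + 1 + 1) := by
    exact div_le_div₀ (by linarith) (by linarith) (by linarith) (by linarith)
  have r5 : c / ((N : ℝ) + 1 + 1) = c / 2 / ((N : ℝ) + 1 + 1) + c / 2 / ((N : ℝ) + 1 + 1) := by ring
  by_cases hcase : α + c / 2 / ((N : ℝ) + 1 + 1) ≤ aLev L γ m (N + 1)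
  · refine ⟨N + 1, abs_le.2 ⟨by push_cast; linarith, by push_cast; linarith⟩, ?_, ?_⟩
    · push_cast; linarith
    · push_cast
      have : N + 1 + 2 = N + 2 + 1 := by ring
      rw [this]
      have : aLev L γ m (N + 1 + 1) = aLev L γ m (N + 2) := rfl
      linarith
  · push Not at hcase
    refine ⟨N, abs_le.2 ⟨by linarith, by linarith⟩, ?_, ?_⟩
    · linarith
    · have : aLev L γ m (N + 1 + 1) = aLev L γ m (N + 2) := rfl
      linarith

theorem good_prob {p L γ : ℝ} (h0 : 0 ≤ p) (h1 : p ≤ 1)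
    (hp : p = exp (-L + γ / 2)) (hq : 1 - p = exp (-L - γ / 2)) {ν : Measure (ℕ → ℕ → Bool)}
    (hν : IIDBits p ν) {α : ℝ} (hα : 0 < α) (hα1 : α ≤ 1) (m k : ℕ) {c : ℝ} (hc : 0 < c)
    (hk1 : α + c / ((k : ℝ) + 3) ≤ aLev L γ (m + 1) k)
    (hk2 : aLev L γ (m + 1) (k + 2) ≤ α - c / ((k : ℝ) + 3)) :
    1 - ENNReal.ofReal (2 / c ^ 2 * (((k : ℝ) + 3) ^ 2 / 2 ^ k)) ≤
      ν {ω | fillupLevel α ω (m + 2) = k ∨ fillupLevel α ω (m + 2) = k + 1} := by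
  haveI := hν.1
  set δ := c / ((k : ℝ) + 3) with hδ
  have hδ0 : 0 < δ := by positivity
  have b1 := frac_cheb h0 h1 hp hq hν m k hδ0
  have b2 := frac_cheb h0 h1 hp hq hν m (k + 2) hδ0
  set B1 := {ω | δ ≤ |fracFilled ω (m + 2) k - aLev L γ (m + 1) k|}
  set B2 := {ω | δ ≤ |fracFilled ω (m + 2) (k + 2) - aLev L γ (m + 1) (k + 2)|}
  set A := {ω | fillupLevel α ω (m + 2) = k ∨ fillupLevel α ω (m + 2) = k + 1}
  have hcov : (Set.univ : Set (ℕ → ℕ → Bool)) ⊆ A ∪ (B1 ∪ B2) := by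
    intro ω _
    by_cases hB1 : ω ∈ B1
    · exact Or.inr (Or.inl hB1)
    by_cases hB2 : ω ∈ B2
    · exact Or.inr (Or.inr hB2)
    left
    simp only [B1, B2, Set.mem_setOf_eq, not_le] at hB1 hB2
    rw [abs_lt] at hB1 hB2
    exact level_of hα hα1 ω (m + 2) (by omega) k (by linarith [hB1.1]) (by linarith [hB2.2])
  have e1 : (1 : ENNReal) ≤ ν A + (ν B1 + ν B2) := by
    rw [← measure_univ (μ := ν)]
    exact (measure_mono hcov).trans ((measure_union_le _ _).trans
      (add_le_add le_rfl (measure_union_le _ _)))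
  rw [tsub_le_iff_right]
  refine e1.trans (add_le_add le_rfl ?_)
  refine (add_le_add b1 b2).trans ?_
  rw [← ENNReal.ofReal_add (by positivity) (by positivity)]
  refine ENNReal.ofReal_le_ofReal ?_
  have f1 : 1 / (2 ^ k * δ ^ 2) = 1 / c ^ 2 * (((k : ℝ) + 3) ^ 2 / 2 ^ k) := by
    rw [hδ]; field_simp
  have f2 : 1 / (2 ^ (k + 2) * δ ^ 2) ≤ 1 / (2 ^ k * δ ^ 2) := by
    gcongr
    · norm_num
    · omega
  rw [f1] at f2 ⊢
  have : 2 / c ^ 2 * (((k : ℝ) + 3) ^ 2 / 2 ^ k) = 1 / c ^ 2 * (((k : ℝ) + 3) ^ 2 / 2 ^ k) +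
    1 / c ^ 2 * (((k : ℝ) + 3) ^ 2 / 2 ^ k) := by ring
  linarith

theorem err_tendsto (c : ℝ) :
    Tendsto (fun k : ℕ => 2 / c ^ 2 * (((k : ℝ) + 3) ^ 2 / 2 ^ k)) atTop (nhds 0) := by
  have h := tendsto_pow_const_div_const_pow_of_one_lt 2 (r := (2 : ℝ)) (by norm_num)
  have h3 := (h.comp (tendsto_add_atTop_nat 3)).const_mul (2 / c ^ 2 * 8)
  rw [mul_zero] at h3
  refine h3.congr fun k => ?_
  simp only [Function.comp]
  push_cast
  rw [pow_add]
  field_simp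
  norm_num

theorem fillupLevel_two_point_concentration
    (p q α : ℝ) (hp : 0 < p) (hp1 : p < 1) (hq : q = 1 - p) (hα : 0 < α) (hα1 : α < 1)
    (ν : Measure (ℕ → ℕ → Bool)) (hν : IIDBits p ν)
    (xα : ℝ) (hxα : ProbabilityTheory.cdf (ProbabilityTheory.gaussianReal 0 1) xα = α) :
    ∃ C > (0 : ℝ), ∃ kn : ℕ → ℕ,
      (∀ n : ℕ, 2 ≤ n →
        |(kn n : ℝ) -
            (Real.logb (1 / Real.sqrt (p * q)) n -
              |Real.log (p / q)| / (2 * Real.log (1 / Real.sqrt (p * q)) ^ ((3 : ℝ) / 2))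
                * xα * Real.sqrt (Real.log n))| ≤ C) ∧
      Tendsto
        (fun n : ℕ =>
          ν {ω | fillupLevel α ω n = kn n ∨ fillupLevel α ω n = kn n + 1})
        atTop (nhds 1) := by
  have hq0 : 0 < q := by linarith
  have hlp : log p < 0 := Real.log_neg hp hp1
  have hlq : log q < 0 := Real.log_neg hq0 (by linarith)
  set L := Real.log (1 / Real.sqrt (p * q)) with hLdef
  set γ := Real.log (p / q) with hγdef
  have hL : L = -(log p + log q) / 2 := by
    rw [hLdef, one_div, Real.log_inv, Real.log_sqrt (by positivity),
      Real.log_mul hp.ne' hq0.ne']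
    ring
  have hγ : γ = log p - log q := Real.log_div hp.ne' hq0.ne'
  have e1 : -L + γ / 2 = log p := by rw [hL, hγ]; ring
  have e2 : -L - γ / 2 = log q := by rw [hL, hγ]; ring
  have hpe : p = exp (-L + γ / 2) := by rw [e1, Real.exp_log hp]
  have hqe : 1 - p = exp (-L - γ / 2) := by rw [e2, Real.exp_log hq0, hq]
  have hL0 : 0 < L := by rw [hL]; linarith
  obtain ⟨C, hC, c, hc, hev⟩ := choose_level L γ xα α hL0 (by rw [e1]; exact hlp)
    (by rw [e2]; exact hlq) hα hα1 hxα
  obtain ⟨m0, hm0⟩ := eventually_atTop.1 hev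
  choose! f hf using hm0
  set Kn : ℕ → ℝ := fun n => Kf L γ xα (log (n : ℝ)) with hKn
  have hKeq : ∀ n : ℕ, Real.logb (1 / Real.sqrt (p * q)) n - |γ| / (2 * L ^ ((3 : ℝ) / 2))
                * xα * Real.sqrt (Real.log n) = Kn n := fun n => rfl
  simp only [hKeq]
  set kn : ℕ → ℕ := fun n => if m0 + 2 ≤ n then f (n - 1) else 0 with hkn
  have hsum : 0 ≤ ∑ n ∈ Finset.range (m0 + 2), |Kn n| := Finset.sum_nonneg fun _ _ => abs_nonneg _
  have hcast : ∀ n : ℕ, m0 + 2 ≤ n → ((n - 1 : ℕ) : ℝ) + 1 = n := fun n hn => by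
    rw [Nat.cast_sub (by omega)]; push_cast; ring
  refine ⟨C + ∑ n ∈ Finset.range (m0 + 2), |Kn n|, by linarith, kn, ?_, ?_⟩
  · intro n _
    by_cases h : m0 + 2 ≤ n
    · have := (hf (n - 1) (by omega)).1
      rw [hcast n h] at this
      simp only [hkn, if_pos h]
      exact this.trans (by linarith)
    · simp only [hkn, if_neg h]
      have : |Kn n| ≤ ∑ n ∈ Finset.range (m0 + 2), |Kn n| :=
        Finset.single_le_sum (f := fun n => |Kn n|) (fun _ _ => abs_nonneg _)
          (Finset.mem_range.2 (by omega))
      rw [Nat.cast_zero, zero_sub, abs_neg]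
      linarith
  · have hkinf : Tendsto f atTop atTop := by
      rw [← tendsto_natCast_atTop_iff (R := ℝ)]
      refine tendsto_atTop_mono' _ ?_ (tendsto_atTop_add_const_right _ (-C) (Kf_tendsto L γ xα hL0))
      filter_upwards [eventually_ge_atTop m0] with m hm
      have := (abs_le.1 (hf m hm).1).1
      linarith
    haveI := hν.1
    rw [← tendsto_add_atTop_iff_nat (m0 + 2)]
    have hlow : Tendsto (fun n : ℕ => 1 - ENNReal.ofReal
        (2 / c ^ 2 * (((f (n + m0 + 1) : ℝ) + 3) ^ 2 / 2 ^ (f (n + m0 + 1))))) atTop (nhds 1) := by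
      have a := (err_tendsto c).comp (hkinf.comp (tendsto_add_atTop_nat (m0 + 1)))
      have b := ENNReal.tendsto_ofReal a
      rw [ENNReal.ofReal_zero] at b
      have d := ENNReal.Tendsto.sub (tendsto_const_nhds (x := (1 : ENNReal)) (f := atTop)) b
        (Or.inl ENNReal.one_ne_top)
      rw [tsub_zero] at d
      exact d
    refine tendsto_of_tendsto_of_tendsto_of_le_of_le hlow tendsto_const_nhds ?_ ?_
    · intro n
      have hk : kn (n + (m0 + 2)) = f (n + m0 + 1) := by
        simp only [hkn]; rw [if_pos (by omega)]; congr 1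
      have := hf (n + m0 + 1) (by omega)
      simp only [hk]
      exact good_prob hp.le hp1.le hpe hqe hν hα hα1.le (n + m0) (f (n + m0 + 1)) hc this.2.1 this.2.2
    · intro n
      exact prob_le_one
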